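/- arXiv:1109.1200 — 2 statements merged into one kernel-verified Lean document; each statement's English description precedes it below -/
import Mathlib

section
/- Let H be an infinite-dimensional separable complex Hilbert space. Every action of the unitary group U(H) (as an abstract group) by isometries on a separable metric space X is automatically continuous as a map U(H) × X → X, where U(H) carries the strong operator topology. -/
/-- The strong operator topology on the group of invertible linear isometries of `H`:
the topology of pointwise convergence on `H`. -/
noncomputable def strongOperatorTopology (𝕜 H : Type*) [RCLike 𝕜] [NormedAddCommGroup H]
    [InnerProductSpace 𝕜 H] : TopologicalSpace (H ≃ₗᵢ[𝕜] H) :=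
  TopologicalSpace.induced (fun u => (u : H → H)) Pi.topologicalSpace

open scoped InnerProductSpace

section HilbertBases

variable {H : Type*} [NormedAddCommGroup H] [InnerProductSpace ℂ H]

theorem Orthonormal.countable_index [TopologicalSpace.SeparableSpace H] {ι : Type*} {v : ι → H}
    (hv : Orthonormal ℂ v) : Countable ι := by
  refine Pairwise.countable_of_isOpen_disjoint (s := fun i => Metric.ball (v i) (1 / 2))
    (fun i j hij => ?_) (fun _ => Metric.isOpen_ball)
    (fun i => ⟨v i, Metric.mem_ball_self (by norm_num)⟩)
  refine Metric.ball_disjoint_ball ?_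
  have h : ‖v i - v j‖ ^ 2 = 2 := by
    rw [@norm_sub_sq ℂ, hv.2 hij, hv.1, hv.1]
    norm_num
  rw [dist_eq_norm]
  nlinarith [norm_nonneg (v i - v j)]

theorem Orthonormal.sumElim {ι κ : Type*} {v : ι → H} {w : κ → H} (hv : Orthonormal ℂ v)
    (hw : Orthonormal ℂ w) (h : ∀ i j, ⟪v i, w j⟫_ℂ = 0) : Orthonormal ℂ (Sum.elim v w) := by
  refine ⟨?_, ?_⟩
  · rintro (i | i)
    exacts [hv.1 i, hw.1 i]
  · rintro (i | i) (j | j) hij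
    · exact hv.2 (fun e => hij (congrArg _ e))
    · exact h i j
    · exact inner_eq_zero_symm.1 (h j i)
    · exact hw.2 (fun e => hij (congrArg _ e))

theorem mem_span_range_orthogonal_iff {ι : Type*} {v : ι → H} {x : H} :
    x ∈ (Submodule.span ℂ (Set.range v))ᗮ ↔ ∀ i, ⟪v i, x⟫_ℂ = 0 := by
  refine ⟨fun h i => h _ (Submodule.subset_span ⟨i, rfl⟩), fun h => ?_⟩
  rw [Submodule.mem_orthogonal]
  intro u hu
  induction hu using Submodule.span_induction with
  | mem x hx => obtain ⟨i, rfl⟩ := hx; exact h i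
  | zero => exact inner_zero_left _
  | add x y _ _ hx hy => rw [inner_add_left, hx, hy, add_zero]
  | smul c x _ hx => rw [inner_smul_left, hx, mul_zero]

theorem Orthonormal.not_finiteDimensional {ι : Type*} [Infinite ι] {K : Submodule ℂ H} {v : ι → H}
    (hv : Orthonormal ℂ v) (hK : ∀ i, v i ∈ K) : ¬ FiniteDimensional ℂ K := by
  intro h
  have hli : LinearIndependent ℂ (fun i => (⟨v i, hK i⟩ : K)) := by
    apply LinearIndependent.of_comp K.subtype
    exact hv.linearIndependent
  have := hli.finite
  exact not_finite ι

theorem not_finiteDimensional_orthogonal (hinf : ¬ FiniteDimensional ℂ H) (L : Submodule ℂ H)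
    [FiniteDimensional ℂ L] : ¬ FiniteDimensional ℂ Lᗮ := by
  intro h
  have : FiniteDimensional ℂ (L ⊔ Lᗮ : Submodule ℂ H) := inferInstance
  rw [Submodule.sup_orthogonal_of_hasOrthogonalProjection] at this
  exact hinf (Submodule.topEquiv.finiteDimensional)

/-- Two Hilbert bases with the same index type are exchanged by an isometric isomorphism. -/
theorem HilbertBasis.exists_linearIsometryEquiv {ι F : Type*} [NormedAddCommGroup F]
    [InnerProductSpace ℂ F] (b : HilbertBasis ι ℂ H) (c : HilbertBasis ι ℂ F) :
    ∃ u : H ≃ₗᵢ[ℂ] F, ∀ i, u (b i) = c i := by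
  classical
  refine ⟨b.repr.trans c.repr.symm, fun i => ?_⟩
  simp [HilbertBasis.repr_self]

theorem HilbertBasis.orthogonal_span_eq_bot {ι : Type*} (b : HilbertBasis ι ℂ H) :
    (Submodule.span ℂ (Set.range b))ᗮ = ⊥ := by
  rw [Submodule.eq_bot_iff]
  intro x hx
  rw [mem_span_range_orthogonal_iff] at hx
  refine b.repr.map_eq_zero_iff.1 (lp.ext (funext fun i => ?_))
  rw [b.repr_apply_apply, hx]
  rfl

variable [CompleteSpace H]

theorem HilbertBasis.exists_reindex {ι κ : Type*} (b : HilbertBasis ι ℂ H) (e : κ ≃ ι) :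
    ∃ c : HilbertBasis κ ℂ H, ∀ k, c k = b (e k) := by
  have h : (Submodule.span ℂ (Set.range (b ∘ e)))ᗮ = ⊥ := by
    rw [e.surjective.range_comp, b.orthogonal_span_eq_bot]
  refine ⟨HilbertBasis.mkOfOrthogonalEqBot (b.orthonormal.comp e e.injective) h, fun k => ?_⟩
  rw [HilbertBasis.coe_mkOfOrthogonalEqBot, Function.comp_apply]

variable [TopologicalSpace.SeparableSpace H]

theorem exists_hilbertBasis_nat (hinf : ¬ FiniteDimensional ℂ H) :
    Nonempty (HilbertBasis ℕ ℂ H) := by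
  obtain ⟨w, b, hb⟩ := exists_hilbertBasis ℂ H
  have hc : Countable w := b.orthonormal.countable_index
  have hi : Infinite w := by
    by_contra hfin
    rw [not_infinite_iff_finite] at hfin
    have := Fintype.ofFinite w
    exact hinf b.toOrthonormalBasis.toBasis.finiteDimensional_of_finite
  obtain ⟨e⟩ := nonempty_equiv_of_countable (α := ℕ) (β := w)
  obtain ⟨c, -⟩ := b.exists_reindex e
  exact ⟨c⟩

theorem Orthonormal.exists_hilbertBasis_sum {ι : Type*} {v : ι → H} (hv : Orthonormal ℂ v)
    (h : ¬ FiniteDimensional ℂ (Submodule.span ℂ (Set.range v))ᗮ) :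
    ∃ b : HilbertBasis (ι ⊕ ℕ) ℂ H, ∀ i, b (Sum.inl i) = v i := by
  obtain ⟨e⟩ := exists_hilbertBasis_nat h
  have ho : Orthonormal ℂ (Sum.elim v (fun n => (e n : H))) :=
    hv.sumElim (e.orthonormal.comp_linearIsometry (Submodule.subtypeₗᵢ _))
      (fun i j => mem_span_range_orthogonal_iff.1 (e j).2 i)
  refine ⟨HilbertBasis.mkOfOrthogonalEqBot ho ?_, fun i => by
    rw [HilbertBasis.coe_mkOfOrthogonalEqBot, Sum.elim_inl]⟩
  rw [Submodule.eq_bot_iff]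
  intro x hx
  rw [mem_span_range_orthogonal_iff] at hx
  have hx' : x ∈ (Submodule.span ℂ (Set.range v))ᗮ :=
    mem_span_range_orthogonal_iff.2 fun i => hx (Sum.inl i)
  have : (⟨x, hx'⟩ : (Submodule.span ℂ (Set.range v))ᗮ) ∈
      (Submodule.span ℂ (Set.range e))ᗮ :=
    mem_span_range_orthogonal_iff.2 fun n => hx (Sum.inr n)
  rw [e.orthogonal_span_eq_bot] at this
  simpa using this

/-- Orthonormal families with infinite-dimensional orthogonal complements are conjugate under the
unitary group. -/
theorem Orthonormal.exists_unitary {ι : Type*} {v w : ι → H} (hv : Orthonormal ℂ v)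
    (hw : Orthonormal ℂ w) (hv' : ¬ FiniteDimensional ℂ (Submodule.span ℂ (Set.range v))ᗮ)
    (hw' : ¬ FiniteDimensional ℂ (Submodule.span ℂ (Set.range w))ᗮ) :
    ∃ u : H ≃ₗᵢ[ℂ] H, ∀ i, u (v i) = w i := by
  obtain ⟨b, hb⟩ := hv.exists_hilbertBasis_sum hv'
  obtain ⟨c, hc⟩ := hw.exists_hilbertBasis_sum hw'
  obtain ⟨u, hu⟩ := b.exists_linearIsometryEquiv c
  exact ⟨u, fun i => by rw [← hb, hu, hc]⟩

/-- A relative version of `Orthonormal.exists_unitary`: the unitary can be chosen to fix a further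
orthonormal family, as soon as there is room on both sides. -/
theorem exists_unitary_fixing {ι κ : Type*} {z : κ → H} {v w : ι → H} {r s : ℕ → H}
    (hz : Orthonormal ℂ z) (hv : Orthonormal ℂ v) (hw : Orthonormal ℂ w)
    (hr : Orthonormal ℂ r) (hs : Orthonormal ℂ s)
    (hzv : ∀ k i, ⟪z k, v i⟫_ℂ = 0) (hzw : ∀ k i, ⟪z k, w i⟫_ℂ = 0)
    (hzr : ∀ k n, ⟪z k, r n⟫_ℂ = 0) (hzs : ∀ k n, ⟪z k, s n⟫_ℂ = 0)
    (hvr : ∀ i n, ⟪v i, r n⟫_ℂ = 0) (hws : ∀ i n, ⟪w i, s n⟫_ℂ = 0) :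
    ∃ u : H ≃ₗᵢ[ℂ] H, (∀ k, u (z k) = z k) ∧ ∀ i, u (v i) = w i := by
  obtain ⟨u, hu⟩ := (hz.sumElim hv hzv).exists_unitary (hz.sumElim hw hzw)
    (hr.not_finiteDimensional fun n => mem_span_range_orthogonal_iff.2 <| by
      rintro (k | i)
      exacts [hzr k n, hvr i n])
    (hs.not_finiteDimensional fun n => mem_span_range_orthogonal_iff.2 <| by
      rintro (k | i)
      exacts [hzs k n, hws i n])
  exact ⟨u, fun k => hu (Sum.inl k), fun i => hu (Sum.inr i)⟩

/-- Linear maps from a finite-dimensional space which pull back the norm to the same seminorm are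
conjugate under the unitary group. -/
theorem exists_unitary_comp_eq (hinf : ¬ FiniteDimensional ℂ H) {E : Type*} [AddCommGroup E]
    [Module ℂ E] [FiniteDimensional ℂ E] (S T : E →ₗ[ℂ] H) (h : ∀ z, ‖T z‖ = ‖S z‖) :
    ∃ u : H ≃ₗᵢ[ℂ] H, ∀ z, u (S z) = T z := by
  obtain ⟨σ, hσ⟩ := S.rangeRestrict.exists_rightInverse_of_surjective S.range_rangeRestrict
  have hσ' : ∀ y : LinearMap.range S, S (σ y) = y := fun y =>
    congrArg Subtype.val (LinearMap.congr_fun hσ y)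
  let φ : LinearMap.range S →ₗᵢ[ℂ] H :=
    { toLinearMap := T ∘ₗ σ
      norm_map' := fun y => by
        rw [LinearMap.comp_apply, h, hσ', Submodule.coe_norm] }
  have hφ : ∀ z, φ (S.rangeRestrict z) = T z := by
    intro z
    have : T (σ (S.rangeRestrict z) - z) = 0 := by
      rw [← norm_eq_zero, h, map_sub, hσ']
      simp
    rw [map_sub, sub_eq_zero] at this
    exact this
  have hcompl : ∀ {ι : Type} [Finite ι] (v : ι → H),
      ¬ FiniteDimensional ℂ (Submodule.span ℂ (Set.range v))ᗮ := fun v =>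
    have := FiniteDimensional.span_of_finite ℂ (Set.finite_range v)
    not_finiteDimensional_orthogonal hinf _
  let b := stdOrthonormalBasis ℂ (LinearMap.range S)
  obtain ⟨u, hu⟩ := Orthonormal.exists_unitary
    (b.orthonormal.comp_linearIsometry (Submodule.subtypeₗᵢ _))
    (b.orthonormal.comp_linearIsometry φ) (hcompl _) (hcompl _)
  refine ⟨u, fun z => ?_⟩
  have key : u.toLinearEquiv.toLinearMap ∘ₗ (LinearMap.range S).subtype = φ.toLinearMap :=
    b.toBasis.ext fun i => by simpa using hu i
  rw [← hφ]
  exact LinearMap.congr_fun key (S.rangeRestrict z)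

end HilbertBases

section Length

/-- A length function on a group whose associated left-invariant pseudometric is separable. -/
structure IsSeparableLength {G : Type*} [Group G] (ℓ : G → ℝ) : Prop where
  map_inv : ∀ g, ℓ g⁻¹ = ℓ g
  map_mul_le : ∀ g h, ℓ (g * h) ≤ ℓ g + ℓ h
  exists_seq : ∀ δ > 0, ∃ s : ℕ → G, ∀ g, ∃ n, ℓ ((s n)⁻¹ * g) < δ

theorem IsSeparableLength.exists_pair {G : Type*} [Group G] {ℓ : G → ℝ}
    (hℓ : IsSeparableLength ℓ) {ι : Type*} [Uncountable ι] (u : ι → G) {δ : ℝ} (hδ : 0 < δ) :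
    ∃ i j, i ≠ j ∧ ℓ ((u i)⁻¹ * u j) ≤ 2 * δ := by
  obtain ⟨s, hs⟩ := hℓ.exists_seq δ hδ
  choose n hn using fun i => hs (u i)
  obtain ⟨i, j, hij, hne⟩ : ∃ i j, n i = n j ∧ i ≠ j := by
    by_contra! h
    exact not_countable (Function.Injective.countable (f := n) h)
  refine ⟨i, j, hne, ?_⟩
  have h1 := hℓ.map_mul_le ((s (n i))⁻¹ * u i)⁻¹ ((s (n j))⁻¹ * u j)
  rw [hℓ.map_inv, hij] at h1
  have h2 : ((s (n j))⁻¹ * u i)⁻¹ * ((s (n j))⁻¹ * u j) = (u i)⁻¹ * u j := by group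
  rw [h2] at h1
  have h3 := hn i
  have h4 := hn j
  rw [hij] at h3
  linarith

end Length

section FiniteDimensionalFixing

theorem CStarAlgebra.exists_star_mul_self_eq_sub {A : Type*} [CStarAlgebra A] [PartialOrder A]
    [StarOrderedRing A] {a : A} (ha : ‖a‖ ≤ 1) : ∃ r : A, star r * r = 1 - star a * a := by
  have h : 0 ≤ 1 - star a * a := by
    rw [sub_nonneg, ← CStarAlgebra.norm_le_one_iff_of_nonneg _ (star_mul_self_nonneg a),
      CStarRing.norm_star_mul_self]
    exact mul_le_one₀ ha (norm_nonneg _) ha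
  refine ⟨CFC.sqrt (1 - star a * a), ?_⟩
  rw [(CFC.sqrt_nonneg _).isSelfAdjoint.star_eq, CFC.sqrt_mul_sqrt_self _ h]

variable {H : Type*} [NormedAddCommGroup H] [InnerProductSpace ℂ H]

variable [CompleteSpace H] [TopologicalSpace.SeparableSpace H]
  {ℓ : (H ≃ₗᵢ[ℂ] H) → ℝ} {F : Submodule ℂ H} [FiniteDimensional ℂ F]

theorem exists_linearIsometry_orthogonal (hinf : ¬ FiniteDimensional ℂ H) (F L : Submodule ℂ H)
    [FiniteDimensional ℂ F] [FiniteDimensional ℂ L] :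
    ∃ q : F →ₗᵢ[ℂ] H, ∀ y ∈ L, ∀ x, ⟪y, q x⟫_ℂ = 0 := by
  obtain ⟨e⟩ := exists_hilbertBasis_nat (not_finiteDimensional_orthogonal hinf L)
  let o := stdOrthonormalBasis ℂ F
  let f : F →ₗ[ℂ] Lᗮ := o.toBasis.constr ℂ fun i => e i
  have hf : f ∘ o.toBasis = fun i : Fin (Module.finrank ℂ F) => e i := by
    ext i
    simp [f]
  have ho : Orthonormal ℂ o.toBasis := by simp [o.orthonormal]
  let q := f.isometryOfOrthonormal ho (hf ▸ e.orthonormal.comp _ Fin.val_injective)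
  exact ⟨Lᗮ.subtypeₗᵢ.comp q, fun y hy x => (q x).2 y hy⟩

theorem IsSeparableLength.exists_rotation (hℓ : IsSeparableLength ℓ)
    (hinf : ¬ FiniteDimensional ℂ H) (F : Submodule ℂ H) [FiniteDimensional ℂ F] {δ : ℝ}
    (hδ : 0 < δ) : ∃ (w : H ≃ₗᵢ[ℂ] H) (c s : ℝ), ℓ w ≤ 2 * δ ∧ c ^ 2 + s ^ 2 = 1 ∧ s ≠ 0 ∧
      ∀ x y : F, ⟪(x : H), w y⟫_ℂ = c * ⟪x, y⟫_ℂ := by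
  obtain ⟨q, hq⟩ := exists_linearIsometry_orthogonal hinf F F
  have hinner : ∀ (a b a' b' : ℝ) (x y : F),
      ⟪(a : ℂ) • (x : H) + (b : ℂ) • q x, (a' : ℂ) • (y : H) + (b' : ℂ) • q y⟫_ℂ =
        (a * a' + b * b' : ℝ) * ⟪x, y⟫_ℂ := by
    intro a b a' b' x y
    have h1 := hq x x.2 y
    have h2 := inner_eq_zero_symm.1 (hq y y.2 x)
    simp only [inner_add_left, inner_add_right, inner_smul_left, inner_smul_right, h1, h2,
      q.inner_map_map, Submodule.coe_inner, Complex.conj_ofReal]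
    push_cast
    ring
  have hrot : ∀ θ : ℝ, ∃ u : H ≃ₗᵢ[ℂ] H, ∀ x : F,
      u x = (Real.cos θ : ℂ) • (x : H) + (Real.sin θ : ℂ) • q x := by
    intro θ
    refine exists_unitary_comp_eq hinf F.subtype
      ((Real.cos θ : ℂ) • F.subtype + (Real.sin θ : ℂ) • q.toLinearMap) fun x => ?_
    have := hinner (Real.cos θ) (Real.sin θ) (Real.cos θ) (Real.sin θ) x x
    rw [← sq, ← sq, Real.cos_sq_add_sin_sq, inner_self_eq_norm_sq_to_K,
      inner_self_eq_norm_sq_to_K] at this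
    have h2 : ‖(Real.cos θ : ℂ) • (x : H) + (Real.sin θ : ℂ) • q x‖ ^ 2 = ‖x‖ ^ 2 := by
      norm_num at this
      exact_mod_cast this
    exact (sq_eq_sq₀ (norm_nonneg _) (norm_nonneg _)).1 h2
  choose u hu using hrot
  have : Uncountable (Set.Icc (0 : ℝ) 1) := by
    rw [← not_countable_iff, Set.countable_coe_iff, Cardinal.Real.Icc_countable_iff]
    norm_num
  obtain ⟨i, j, hij, hle⟩ := hℓ.exists_pair (fun θ : Set.Icc (0 : ℝ) 1 => u θ) hδ
  refine ⟨_, Real.cos (i - j), Real.sin (i - j), hle, Real.cos_sq_add_sin_sq _, ?_, ?_⟩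
  · have hne : (i : ℝ) - j ≠ 0 := sub_ne_zero.2 fun h => hij (Subtype.ext h)
    have hi := i.2
    have hj := j.2
    have hpi := Real.pi_gt_three
    rw [Ne, Real.sin_eq_zero_iff_of_lt_of_lt] <;>
      first | exact hne | linarith [hi.1, hi.2, hj.1, hj.2]
  · intro x y
    have h1 : ⟪(x : H), ((u i)⁻¹ * u j) y⟫_ℂ = ⟪u i x, u j y⟫_ℂ := by
      rw [← (u i).inner_map_map]
      simp
    rw [h1, hu, hu, hinner, Real.cos_sub]

omit [CompleteSpace H] [TopologicalSpace.SeparableSpace H] [FiniteDimensional ℂ F] in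
theorem norm_coe_add_eq {f k : F → H} (hf : ∀ y, ‖f y‖ = ‖y‖) (hk : ∀ y, ‖k y‖ = ‖y‖)
    (h : ∀ x y : F, ⟪(x : H), f y⟫_ℂ = ⟪(x : H), k y⟫_ℂ) (x y : F) :
    ‖(x : H) + k y‖ = ‖(x : H) + f y‖ := by
  refine (sq_eq_sq₀ (norm_nonneg _) (norm_nonneg _)).1 ?_
  rw [@norm_add_sq ℂ, @norm_add_sq ℂ, h, hf, hk]

theorem exists_unitary_fixing_of_inner_eq (hinf : ¬ FiniteDimensional ℂ H) (f k : F →ₗᵢ[ℂ] H)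
    (h : ∀ x y : F, ⟪(x : H), f y⟫_ℂ = ⟪(x : H), k y⟫_ℂ) :
    ∃ a : H ≃ₗᵢ[ℂ] H, (∀ x ∈ F, a x = x) ∧ ∀ y, a (f y) = k y := by
  obtain ⟨a, ha⟩ := exists_unitary_comp_eq hinf (F.subtype.coprod f.toLinearMap)
    (F.subtype.coprod k.toLinearMap) fun z => by
      simpa using norm_coe_add_eq f.norm_map k.norm_map h z.1 z.2
  exact ⟨a, fun x hx => by simpa using ha (⟨x, hx⟩, 0), fun y => by simpa using ha (0, y)⟩

variable {K : ℝ} {w : H ≃ₗᵢ[ℂ] H} {c s : ℝ}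

theorem IsSeparableLength.le_of_inner_eq (hℓ : IsSeparableLength ℓ)
    (hinf : ¬ FiniteDimensional ℂ H)
    (hK : ∀ g : H ≃ₗᵢ[ℂ] H, (∀ x ∈ F, g x = x) → ℓ g ≤ K)
    (hw : ∀ x y : F, ⟪(x : H), w y⟫_ℂ = c * ⟪x, y⟫_ℂ) {k : H ≃ₗᵢ[ℂ] H}
    (hk : ∀ x y : F, ⟪(x : H), k y⟫_ℂ = c * ⟪x, y⟫_ℂ) : ℓ k ≤ 2 * K + ℓ w := by
  obtain ⟨a, ha, hak⟩ := exists_unitary_fixing_of_inner_eq hinf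
    (w.toLinearIsometry.comp F.subtypeₗᵢ) (k.toLinearIsometry.comp F.subtypeₗᵢ)
    fun x y => (hw x y).trans (hk x y).symm
  have h1 : ℓ (w⁻¹ * a⁻¹ * k) ≤ K := hK _ fun x hx => by
    have : a (w x) = k x := hak ⟨x, hx⟩
    simp [← this]
  have h2 := hℓ.map_mul_le (a * w) (w⁻¹ * a⁻¹ * k)
  have h3 := hℓ.map_mul_le a w
  have h4 := hK a ha
  rw [show a * w * (w⁻¹ * a⁻¹ * k) = k by group] at h2
  linarith

omit [CompleteSpace H] [TopologicalSpace.SeparableSpace H] in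
theorem exists_norm_sq_eq_sub (N : F →L[ℂ] F) (hN : ‖N‖ ≤ 1) :
    ∃ R : F →L[ℂ] F, ∀ y, ‖R y‖ ^ 2 = ‖y‖ ^ 2 - ‖N y‖ ^ 2 := by
  obtain ⟨R, h⟩ := CStarAlgebra.exists_star_mul_self_eq_sub (A := F →L[ℂ] F) (a := N) hN
  refine ⟨R, fun y => ?_⟩
  have hR : ∀ T : F →L[ℂ] F, ⟪y, (star T * T) y⟫_ℂ = ((‖T y‖ ^ 2 : ℝ) : ℂ) := fun T => by
    rw [mul_apply_eq_comp, ContinuousLinearMap.star_eq_adjoint,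
      ContinuousLinearMap.adjoint_inner_right, inner_self_eq_norm_sq_to_K]
    simp
  have h3 := hR R
  rw [h, sub_apply, inner_sub_right, hR N,
    one_apply_eq_self, inner_self_eq_norm_sq_to_K] at h3
  refine Complex.ofReal_injective ?_
  simpa using h3.symm

theorem exists_linearIsometry_dilation (hinf : ¬ FiniteDimensional ℂ H) (hcs : c ^ 2 + s ^ 2 = 1)
    (hw : ∀ x y : F, ⟪(x : H), w y⟫_ℂ = c * ⟪x, y⟫_ℂ) (N : F →L[ℂ] F) (hN : ‖N‖ ≤ 1) :
    ∃ X : F →ₗᵢ[ℂ] H, ∀ x y : F, ⟪w x, X y⟫_ℂ = c * ⟪x, y⟫_ℂ ∧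
      ⟪(x : H), X y⟫_ℂ = (c ^ 2 : ℝ) * ⟪x, y⟫_ℂ + (s ^ 2 : ℝ) * ⟪x, N y⟫_ℂ := by
  have hw' : ∀ x y : F, ⟪w x, (y : H)⟫_ℂ = c * ⟪x, y⟫_ℂ := fun x y => by
    rw [← inner_conj_symm, hw, map_mul, Complex.conj_ofReal, inner_conj_symm]
  obtain ⟨R, hR⟩ : ∃ R : F →L[ℂ] F, ∀ y, ‖R y‖ ^ 2 = ‖y‖ ^ 2 - ‖N y‖ ^ 2 :=
    exists_norm_sq_eq_sub N hN
  obtain ⟨q, hq⟩ := exists_linearIsometry_orthogonal hinf F (F ⊔ F.map w.toLinearEquiv.toLinearMap)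
  have hq1 : ∀ x y : F, ⟪(x : H), q y⟫_ℂ = 0 := fun x y =>
    hq x (Submodule.mem_sup_left x.2) y
  have hq2 : ∀ x y : F, ⟪w x, q y⟫_ℂ = 0 := fun x y =>
    hq (w x) (Submodule.mem_sup_right ⟨x, x.2, rfl⟩) y
  let X₀ : F →ₗ[ℂ] H := (c : ℂ) • (w.toLinearEquiv.toLinearMap ∘ₗ F.subtype) +
    (F.subtype - (c : ℂ) • (w.toLinearEquiv.toLinearMap ∘ₗ F.subtype)) ∘ₗ N.toLinearMap +
    (s : ℂ) • (q.toLinearMap ∘ₗ R.toLinearMap)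
  have hX₀ : ∀ y, X₀ y = (c : ℂ) • w y + (((N y : F) : H) - (c : ℂ) • w (N y)) +
    (s : ℂ) • q (R y) := fun y => rfl
  have hwX : ∀ x y : F, ⟪w x, X₀ y⟫_ℂ = c * ⟪x, y⟫_ℂ := fun x y => by
    simp only [hX₀, inner_add_right, inner_sub_right, inner_smul_right, hq2, hw',
      w.inner_map_map, Submodule.coe_inner]
    ring
  have hcs' : (c : ℂ) ^ 2 + (s : ℂ) ^ 2 = 1 := by exact_mod_cast hcs
  have hxX : ∀ x y : F, ⟪(x : H), X₀ y⟫_ℂ =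
      (c ^ 2 : ℝ) * ⟪x, y⟫_ℂ + (s ^ 2 : ℝ) * ⟪x, N y⟫_ℂ := fun x y => by
    simp only [hX₀, inner_add_right, inner_sub_right, inner_smul_right, hq1, hw,
      Submodule.coe_inner]
    push_cast
    rw [← eq_sub_iff_add_eq'] at hcs'
    rw [hcs']
    ring
  have hqX : ∀ x y : F, ⟪q x, X₀ y⟫_ℂ = s * ⟪x, R y⟫_ℂ := fun x y => by
    simp only [hX₀, inner_add_right, inner_sub_right, inner_smul_right,
      inner_eq_zero_symm.1 (hq1 _ x), inner_eq_zero_symm.1 (hq2 _ x), q.inner_map_map]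
    ring
  have hnorm : ∀ y, ‖X₀ y‖ = ‖y‖ := fun y => by
    have h : ⟪X₀ y, X₀ y⟫_ℂ = ⟪y, y⟫_ℂ := by
      nth_rewrite 1 [hX₀]
      simp only [inner_add_left, inner_sub_left, inner_smul_left, hwX, hxX, hqX,
        Complex.conj_ofReal]
      have hRR : ⟪R y, R y⟫_ℂ = ⟪y, y⟫_ℂ - ⟪N y, N y⟫_ℂ := by
        simp only [inner_self_eq_norm_sq_to_K]
        exact_mod_cast congrArg (Complex.ofReal) (hR y)
      rw [hRR]
      push_cast
      linear_combination (⟪y, y⟫_ℂ) * hcs'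
    simp only [inner_self_eq_norm_sq_to_K] at h
    have h2 : ‖X₀ y‖ ^ 2 = ‖y‖ ^ 2 := by exact_mod_cast h
    exact (sq_eq_sq₀ (norm_nonneg _) (norm_nonneg _)).1 h2
  exact ⟨⟨X₀, hnorm⟩, fun x y => ⟨hwX x y, hxX x y⟩⟩

theorem IsSeparableLength.le_of_inner_eq_contraction (hℓ : IsSeparableLength ℓ)
    (hinf : ¬ FiniteDimensional ℂ H)
    (hK : ∀ g : H ≃ₗᵢ[ℂ] H, (∀ x ∈ F, g x = x) → ℓ g ≤ K) (hcs : c ^ 2 + s ^ 2 = 1)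
    (hw : ∀ x y : F, ⟪(x : H), w y⟫_ℂ = c * ⟪x, y⟫_ℂ) (N : F →L[ℂ] F) (hN : ‖N‖ ≤ 1)
    {k : H ≃ₗᵢ[ℂ] H}
    (hk : ∀ x y : F, ⟪(x : H), k y⟫_ℂ = (c ^ 2 : ℝ) * ⟪x, y⟫_ℂ + (s ^ 2 : ℝ) * ⟪x, N y⟫_ℂ) :
    ℓ k ≤ 2 * (2 * K + ℓ w) := by
  obtain ⟨X, hX⟩ := exists_linearIsometry_dilation hinf hcs hw N hN
  obtain ⟨a, ha, hak⟩ := exists_unitary_fixing_of_inner_eq hinf X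
    (k.toLinearIsometry.comp F.subtypeₗᵢ) fun x y => (hX x y).2.trans (hk x y).symm
  have hak' : ∀ y : F, k y = a (X y) := fun y => (hak y).symm
  have h1 : ℓ (a * w) ≤ 2 * K + ℓ w := hℓ.le_of_inner_eq hinf hK hw fun x y => by
    rw [LinearIsometryEquiv.coe_mul, Function.comp_apply, ← hw x y]
    nth_rewrite 1 [← ha x x.2]
    exact a.inner_map_map _ _
  have h2 : ℓ ((a * w)⁻¹ * k) ≤ 2 * K + ℓ w := hℓ.le_of_inner_eq hinf hK hw fun x y => by
    rw [← (a * w).inner_map_map, ← (hX x y).1]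
    simp [hak']
  have h3 := hℓ.map_mul_le (a * w) ((a * w)⁻¹ * k)
  rw [mul_inv_cancel_left] at h3
  linarith

theorem IsSeparableLength.exists_le_of_norm_sub_le (hℓ : IsSeparableLength ℓ)
    (hinf : ¬ FiniteDimensional ℂ H)
    (hK : ∀ g : H ≃ₗᵢ[ℂ] H, (∀ x ∈ F, g x = x) → ℓ g ≤ K) {δ : ℝ} (hδ : 0 < δ) :
    ∃ η > 0, ∀ g : H ≃ₗᵢ[ℂ] H, (∀ x ∈ F, ‖g x - x‖ ≤ η * ‖x‖) → ℓ g ≤ 8 * (K + δ) := by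
  obtain ⟨w, c, s, hwδ, hcs, hs, hw⟩ := hℓ.exists_rotation hinf F hδ
  have hs2 : 0 < s ^ 2 := by positivity
  obtain ⟨X, hX⟩ := exists_linearIsometry_dilation hinf hcs hw 0
    (ContinuousLinearMap.opNorm_zero.le.trans zero_le_one)
  obtain ⟨v, hv⟩ := exists_unitary_comp_eq hinf F.subtype X.toLinearMap fun x => X.norm_map x
  have hv' : ∀ x y : F, ⟪(x : H), v y⟫_ℂ = (c ^ 2 : ℝ) * ⟪x, y⟫_ℂ := fun x y => by
    have h1 := (hX x y).2
    have h2 : v y = X y := hv y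
    rw [h2, h1]
    simp
  have hℓv : ℓ v ≤ 2 * (2 * K + ℓ w) :=
    hℓ.le_of_inner_eq_contraction hinf hK hcs hw 0
      (ContinuousLinearMap.opNorm_zero.le.trans zero_le_one) fun x y => by rw [hv']; simp
  refine ⟨s ^ 2, hs2, fun g hg => ?_⟩
  let N : F →L[ℂ] F := ((s ^ 2 : ℝ) : ℂ)⁻¹ • (F.orthogonalProjectionOnto ∘L
    ((g * v).toContinuousLinearEquiv.toContinuousLinearMap -
      v.toContinuousLinearEquiv.toContinuousLinearMap) ∘L F.subtypeL)
  have hN : ∀ x y : F, (s ^ 2 : ℝ) * ⟪x, N y⟫_ℂ = ⟪(x : H), g (v y) - v y⟫_ℂ := by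
    intro x y
    have : ((s ^ 2 : ℝ) : ℂ) ≠ 0 := by exact_mod_cast hs2.ne'
    simp only [N, smul_apply, inner_smul_right]
    rw [mul_inv_cancel_left₀ this]
    exact Submodule.inner_orthogonalProjectionOnto_eq_of_mem_left x _
  have hN1 : ‖N‖ ≤ 1 := by
    refine ContinuousLinearMap.opNorm_le_bound _ zero_le_one fun y => ?_
    have h1 : s ^ 2 * ‖N y‖ ^ 2 = ‖⟪((N y : F) : H), g (v y) - v y⟫_ℂ‖ := by
      rw [← hN, inner_self_eq_norm_sq_to_K, norm_mul]
      simp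
    have h2 : ⟪((N y : F) : H), g (v y) - v y⟫_ℂ = ⟪g⁻¹ (N y : F) - (N y : F), v y⟫_ℂ := by
      rw [inner_sub_left, inner_sub_right, ← g.inner_map_map (g⁻¹ (N y : F))]
      simp
    have h3 : ‖g⁻¹ (N y : F) - (N y : F)‖ ≤ s ^ 2 * ‖N y‖ := by
      rw [← g.norm_map, map_sub, norm_sub_rev]
      simpa using hg (N y) (N y).2
    have h4 := norm_inner_le_norm (𝕜 := ℂ) (g⁻¹ (N y : F) - (N y : F)) (v y)
    rw [← h2, ← h1, v.norm_map] at h4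
    have h5 : s ^ 2 * ‖N y‖ ^ 2 ≤ s ^ 2 * ‖N y‖ * ‖y‖ :=
      h4.trans (mul_le_mul_of_nonneg_right h3 (norm_nonneg _))
    rw [one_mul]
    rcases (norm_nonneg (N y)).eq_or_lt with h | h
    · rw [← h]; exact norm_nonneg _
    · have : 0 < s ^ 2 * ‖N y‖ := by positivity
      nlinarith
  have hgv : ℓ (g * v) ≤ 2 * (2 * K + ℓ w) :=
    hℓ.le_of_inner_eq_contraction hinf hK hcs hw N hN1 fun x y => by
      rw [hN, inner_sub_right, hv']
      simp
  have h := hℓ.map_mul_le (g * v) v⁻¹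
  rw [mul_inv_cancel_right, hℓ.map_inv] at h
  linarith

end FiniteDimensionalFixing

section Generation

variable {H : Type*} [NormedAddCommGroup H] [InnerProductSpace ℂ H] [CompleteSpace H]

omit [CompleteSpace H] in
theorem exists_norm_eq_one_mem_orthogonal {A : Submodule ℂ H} [CompleteSpace A]
    (hA : ¬ FiniteDimensional ℂ A) {s : Set H} (hs : s.Finite) :
    ∃ e ∈ A, ‖e‖ = 1 ∧ ∀ x ∈ s, ⟪x, e⟫_ℂ = 0 := by
  let L : Submodule ℂ A := Submodule.span ℂ (A.orthogonalProjectionOnto '' s)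
  have : FiniteDimensional ℂ L := FiniteDimensional.span_of_finite ℂ (hs.image _)
  have hL := not_finiteDimensional_orthogonal hA L
  have : Nontrivial Lᗮ := by
    by_contra h
    rw [not_nontrivial_iff_subsingleton] at h
    exact hL inferInstance
  obtain ⟨e, he⟩ := exists_norm_eq (Lᗮ) (zero_le_one (α := ℝ))
  refine ⟨e, (e : A).2, he, fun x hx => ?_⟩
  rw [← Submodule.inner_orthogonalProjectionOnto_eq_of_mem_right]
  exact e.2 _ (Submodule.subset_span ⟨x, hx, rfl⟩)

/-- In an infinite-dimensional space `A` there is an orthonormal sequence which a given operator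
maps to an orthogonal sequence, with infinite-dimensional room left over. -/
theorem exists_orthonormal_seq {A : Submodule ℂ H} [CompleteSpace A]
    (hA : ¬ FiniteDimensional ℂ A) (T : H →L[ℂ] H) :
    ∃ e z : ℕ → H, (∀ n, e n ∈ A) ∧ (∀ n, z n ∈ A) ∧ Orthonormal ℂ e ∧ Orthonormal ℂ z ∧
      (Pairwise fun m n => ⟪T (e m), T (e n)⟫_ℂ = 0) ∧ (∀ m n, ⟪e m, z n⟫_ℂ = 0) ∧
      ∀ m n, ⟪T (e m), z n⟫_ℂ = 0 := by
  obtain ⟨f, hf, hr⟩ := exists_seq_of_forall_finset_exists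
    (fun p : H × H => p.1 ∈ A ∧ p.2 ∈ A ∧ ‖p.1‖ = 1 ∧ ‖p.2‖ = 1 ∧ ⟪p.1, p.2⟫_ℂ = 0 ∧
      ⟪T p.1, p.2⟫_ℂ = 0)
    (fun p q => ⟪p.1, q.1⟫_ℂ = 0 ∧ ⟪p.2, q.2⟫_ℂ = 0 ∧ ⟪T p.1, T q.1⟫_ℂ = 0 ∧ ⟪p.1, q.2⟫_ℂ = 0 ∧
      ⟪p.2, q.1⟫_ℂ = 0 ∧ ⟪T p.1, q.2⟫_ℂ = 0 ∧ ⟪p.2, T q.1⟫_ℂ = 0) (by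
    intro s _
    obtain ⟨e, heA, he, hse⟩ := exists_norm_eq_one_mem_orthogonal hA
      (s := ⋃ p ∈ s, {p.1, p.2, T.adjoint (T p.1), T.adjoint p.2})
      (s.finite_toSet.biUnion fun p _ => Set.toFinite _)
    obtain ⟨z, hzA, hz, hsz⟩ := exists_norm_eq_one_mem_orthogonal hA
      (s := {e, T e} ∪ ⋃ p ∈ s, {p.1, p.2, T p.1})
      ((Set.toFinite _).union (s.finite_toSet.biUnion fun p _ => Set.toFinite _))
    simp only [Set.mem_iUnion, Set.mem_union, Set.mem_insert_iff, Set.mem_singleton_iff] at hse hsz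
    refine ⟨(e, z), ⟨heA, hzA, he, hz, hsz e (by simp), hsz (T e) (by simp)⟩, fun p hp => ?_⟩
    refine ⟨hse _ ⟨p, hp, by simp⟩, hsz _ (.inr ⟨p, hp, by simp⟩), ?_,
      hsz _ (.inr ⟨p, hp, by simp⟩), hse _ ⟨p, hp, by simp⟩, hsz _ (.inr ⟨p, hp, by simp⟩), ?_⟩
    · rw [← ContinuousLinearMap.adjoint_inner_left]
      exact hse _ ⟨p, hp, by simp⟩
    · rw [← ContinuousLinearMap.adjoint_inner_left]
      exact hse _ ⟨p, hp, by simp⟩)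
  refine ⟨fun n => (f n).1, fun n => (f n).2, fun n => (hf n).1, fun n => (hf n).2.1,
    ⟨fun n => (hf n).2.2.1, ?_⟩, ⟨fun n => (hf n).2.2.2.1, ?_⟩, ?_, ?_, ?_⟩
  · intro m n hmn
    rcases hmn.lt_or_gt with h | h
    · exact (hr m n h).1
    · exact inner_eq_zero_symm.1 (hr n m h).1
  · intro m n hmn
    rcases hmn.lt_or_gt with h | h
    · exact (hr m n h).2.1
    · exact inner_eq_zero_symm.1 (hr n m h).2.1
  · intro m n hmn
    rcases hmn.lt_or_gt with h | h
    · exact (hr m n h).2.2.1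
    · exact inner_eq_zero_symm.1 (hr n m h).2.2.1
  · intro m n
    rcases lt_trichotomy m n with h | rfl | h
    · exact (hr m n h).2.2.2.1
    · exact (hf m).2.2.2.2.1
    · exact inner_eq_zero_symm.1 (hr n m h).2.2.2.2.1
  · intro m n
    rcases lt_trichotomy m n with h | rfl | h
    · exact (hr m n h).2.2.2.2.2.1
    · exact (hf m).2.2.2.2.2
    · exact inner_eq_zero_symm.1 (hr n m h).2.2.2.2.2.2

/-- `g` fixes all the vectors of the Hilbert basis `b` which are indexed outside of `S`. -/
def FixesOutside {J : Type*} (b : HilbertBasis J ℂ H) (S : Set J) (g : H ≃ₗᵢ[ℂ] H) : Prop :=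
  ∀ j ∉ S, g (b j) = b j

variable {J : Type*} {b : HilbertBasis J ℂ H} {S : Set J}

omit [CompleteSpace H] in
theorem HilbertBasis.inner_eq_zero (b : HilbertBasis J ℂ H) {i j : J} (h : i ≠ j) :
    ⟪b i, b j⟫_ℂ = 0 :=
  b.orthonormal.2 h

omit [CompleteSpace H] in
theorem FixesOutside.inv {g : H ≃ₗᵢ[ℂ] H} (hg : FixesOutside b S g) : FixesOutside b S g⁻¹ :=
  fun j hj => by nth_rewrite 1 [← hg j hj]; simp

omit [CompleteSpace H] in
theorem FixesOutside.mul {g h : H ≃ₗᵢ[ℂ] H} (hg : FixesOutside b S g) (hh : FixesOutside b S h) :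
    FixesOutside b S (g * h) :=
  fun j hj => by rw [LinearIsometryEquiv.coe_mul, Function.comp_apply, hh j hj, hg j hj]

omit [CompleteSpace H] in
theorem FixesOutside.mono {S' : Set J} {g : H ≃ₗᵢ[ℂ] H} (hg : FixesOutside b S g) (h : S ⊆ S') :
    FixesOutside b S' g :=
  fun j hj => hg j fun hj' => hj (h hj')

theorem FixesOutside.apply_eq {g : H ≃ₗᵢ[ℂ] H} (hg : FixesOutside b S g) {x : H}
    (hx : x ∈ (Submodule.span ℂ (Set.range fun j : {j // j ∉ S} => b j))ᗮᗮ) : g x = x := by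
  rw [Submodule.orthogonal_orthogonal_eq_closure] at hx
  let E : Submodule ℂ H := LinearMap.eqLocus g.toLinearEquiv.toLinearMap LinearMap.id
  have hE : IsClosed (E : Set H) := isClosed_eq g.continuous continuous_id
  refine Submodule.topologicalClosure_minimal (t := E) _ (Submodule.span_le.2 ?_) hE hx
  rintro _ ⟨j, rfl⟩
  exact hg j j.2

variable [TopologicalSpace.SeparableSpace H] {ℓ : (H ≃ₗᵢ[ℂ] H) → ℝ}

theorem exists_fixesOutside {ι : Type*} {v w : ι → H} {r s : ℕ → H}
    (hv : Orthonormal ℂ v) (hw : Orthonormal ℂ w) (hr : Orthonormal ℂ r) (hs : Orthonormal ℂ s)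
    (hbv : ∀ j ∉ S, ∀ i, ⟪b j, v i⟫_ℂ = 0) (hbw : ∀ j ∉ S, ∀ i, ⟪b j, w i⟫_ℂ = 0)
    (hbr : ∀ j ∉ S, ∀ n, ⟪b j, r n⟫_ℂ = 0) (hbs : ∀ j ∉ S, ∀ n, ⟪b j, s n⟫_ℂ = 0)
    (hvr : ∀ i n, ⟪v i, r n⟫_ℂ = 0) (hws : ∀ i n, ⟪w i, s n⟫_ℂ = 0) :
    ∃ u : H ≃ₗᵢ[ℂ] H, FixesOutside b S u ∧ ∀ i, u (v i) = w i := by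
  obtain ⟨u, hu, huv⟩ := exists_unitary_fixing
    (b.orthonormal.comp (Subtype.val : {j // j ∉ S} → J) Subtype.val_injective) hv hw hr hs
    (fun k => hbv k k.2) (fun k => hbw k k.2) (fun k => hbr k k.2) (fun k => hbs k k.2) hvr hws
  exact ⟨u, fun j hj => hu ⟨j, hj⟩, huv⟩

/-- If a length function is bounded on the unitary groups of two coordinate subspaces with
infinite-dimensional intersection, then it is bounded on the unitary group of their sum. -/
theorem IsSeparableLength.le_of_fixesOutside_union (hℓ : IsSeparableLength ℓ) {A B : Set J}
    {K K' : ℝ} (hK : ∀ g, FixesOutside b A g → ℓ g ≤ K) (hK' : ∀ g, FixesOutside b B g → ℓ g ≤ K')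
    {c d f : ℕ → J} (hc : Function.Injective c) (hd : Function.Injective d)
    (hf : Function.Injective f) (hcd : ∀ m n, c m ≠ d n) (hcA : ∀ n, c n ∈ A) (hcB : ∀ n, c n ∈ B)
    (hdA : ∀ n, d n ∈ A) (hdB : ∀ n, d n ∈ B) (hfAB : Set.range f = B \ A) {g : H ≃ₗᵢ[ℂ] H}
    (hg : FixesOutside b (A ∪ B) g) : ℓ g ≤ 3 * K + 2 * K' := by
  have hbc := b.orthonormal.comp c hc
  have hbd := b.orthonormal.comp d hd
  have hbf := b.orthonormal.comp f hf
  have hfm : ∀ n, f n ∈ B ∧ f n ∉ A := fun n => hfAB.subset ⟨n, rfl⟩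
  have hne : ∀ {S : Set J} {i j : J}, i ∉ S → j ∈ S → i ≠ j := fun hi hj h => hi (h ▸ hj)
  have hbcd : ∀ m n, ⟪b (c m), b (d n)⟫_ℂ = 0 := fun m n => b.inner_eq_zero (hcd m n)
  have hbfd : ∀ m n, ⟪b (f m), b (d n)⟫_ℂ = 0 := fun m n =>
    b.inner_eq_zero (hne (hfm m).2 (hdA n))
  let L : Submodule ℂ H := Submodule.span ℂ (Set.range fun j : {j // j ∉ A} => b j)
  have hL : ∀ {x}, x ∈ Lᗮ ↔ ∀ j ∉ A, ⟪b j, x⟫_ℂ = 0 := fun {x} => by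
    rw [mem_span_range_orthogonal_iff, Subtype.forall]
  have hbL : ∀ j ∈ A, b j ∈ Lᗮ := fun j hj => hL.2 fun i hi => b.inner_eq_zero (hne hi hj)
  let P := Lᗮ.starProjection
  have hP : ∀ y, P y ∈ Lᗮ := fun y => Lᗮ.starProjection_apply_mem y
  obtain ⟨e, z, heL, hzL, he, hz, hTe, hez, hTz⟩ := exists_orthonormal_seq (A := Lᗮ)
    (hbc.not_finiteDimensional fun n => hbL _ (hcA n))
    (P ∘L g.toContinuousLinearEquiv.toContinuousLinearMap)
  change Pairwise fun m n => ⟪P (g (e m)), P (g (e n))⟫_ℂ = 0 at hTe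
  change ∀ m n, ⟪P (g (e m)), z n⟫_ℂ = 0 at hTz
  obtain ⟨a, haA, hav⟩ : ∃ a : H ≃ₗᵢ[ℂ] H, FixesOutside b A a ∧
      ∀ n, a (P (g (e n))) = (‖P (g (e n))‖ : ℂ) • b (c n) := by
    let ι := {n // P (g (e n)) ≠ 0}
    let v : ι → H := fun n => (‖P (g (e n))‖ : ℂ)⁻¹ • P (g (e n))
    have hv : Orthonormal ℂ v := by
      refine ⟨fun n => ?_, fun m n hmn => ?_⟩
      · simp [v, norm_smul, inv_mul_cancel₀ (norm_ne_zero_iff.2 n.2)]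
      · simp only [v, inner_smul_left, inner_smul_right]
        rw [hTe (Subtype.coe_injective.ne hmn), mul_zero, mul_zero]
    obtain ⟨a, ha, hav⟩ := exists_fixesOutside (b := b) (S := A) (v := v)
      (w := fun n : ι => b (c n)) hv (hbc.comp _ Subtype.val_injective) hz hbd
      (fun j hj n => by simp [v, hL.1 (hP _) j hj])
      (fun j hj n => b.inner_eq_zero (hne hj (hcA n))) (fun j hj n => hL.1 (hzL n) j hj)
      (fun j hj n => b.inner_eq_zero (hne hj (hdA n)))
      (fun i n => by simp [v, hTz]) (fun i n => hbcd i n)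
    refine ⟨a, ha, fun n => ?_⟩
    by_cases hn : P (g (e n)) = 0
    · simp [hn]
    · rw [← hav ⟨n, hn⟩, ← map_smul, smul_inv_smul₀ (by simpa using hn)]
  have hx : ∀ n, ∀ j ∈ A, (∀ m, c m ≠ j) → ⟪b j, a (g (e n))⟫_ℂ = 0 := fun n j hj hcj => by
    have h1 : g (e n) - P (g (e n)) ∈ Lᗮᗮ := Lᗮ.sub_starProjection_mem_orthogonal _
    have h2 : a (g (e n)) = (‖P (g (e n))‖ : ℂ) • b (c n) + (g (e n) - P (g (e n))) := by
      rw [← hav, ← haA.apply_eq h1, ← map_add, add_sub_cancel]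
    rw [h2, inner_add_right, inner_smul_right, h1 _ (hbL j hj), b.inner_eq_zero (hcj n).symm]
    simp
  obtain ⟨b₁, hb₁B, hb₁⟩ := exists_fixesOutside (b := b) (S := B) (v := fun n => a (g (e n)))
    (w := fun n => b (f n)) ((he.comp_linearIsometryEquiv g).comp_linearIsometryEquiv a) hbf hbd hbd
    (fun j hj n => by
      by_cases hjA : j ∈ A
      · exact hx n j hjA fun m h => hne hj (hcB m) h.symm
      · rw [← haA j hjA, a.inner_map_map, ← hg j (by simp [hj, hjA]), g.inner_map_map]
        exact hL.1 (heL n) j hjA)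
    (fun j hj n => b.inner_eq_zero (hne hj (hfm n).1))
    (fun j hj n => b.inner_eq_zero (hne hj (hdB n)))
    (fun j hj n => b.inner_eq_zero (hne hj (hdB n)))
    (fun m n => inner_eq_zero_symm.1 (hx m (d n) (hdA n) fun k => hcd k n)) hbfd
  obtain ⟨a₁, ha₁A, ha₁⟩ := exists_fixesOutside (b := b) (S := A) (v := e)
    (w := fun n => b (c n)) he hbc hz hbd (fun j hj n => hL.1 (heL n) j hj)
    (fun j hj n => b.inner_eq_zero (hne hj (hcA n))) (fun j hj n => hL.1 (hzL n) j hj)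
    (fun j hj n => b.inner_eq_zero (hne hj (hdA n))) hez hbcd
  obtain ⟨b₂, hb₂B, hb₂⟩ := exists_fixesOutside (b := b) (S := B) (v := fun n => b (c n))
    (w := fun n => b (f n)) hbc hbf hbd hbd
    (fun j hj n => b.inner_eq_zero (hne hj (hcB n)))
    (fun j hj n => b.inner_eq_zero (hne hj (hfm n).1))
    (fun j hj n => b.inner_eq_zero (hne hj (hdB n)))
    (fun j hj n => b.inner_eq_zero (hne hj (hdB n))) hbcd hbfd
  have hh : FixesOutside b A (b₁ * a * g * a₁⁻¹ * b₂⁻¹) := by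
    intro j hj
    by_cases hjB : j ∈ B
    · obtain ⟨n, rfl⟩ := hfAB.superset ⟨hjB, hj⟩
      have h1 : b₂⁻¹ (b (f n)) = b (c n) := by rw [← hb₂]; simp
      have h2 : a₁⁻¹ (b (c n)) = e n := by rw [← ha₁]; simp
      simp only [LinearIsometryEquiv.coe_mul, Function.comp_apply, h1, h2]
      exact hb₁ n
    · exact ((((hb₁B.mono Set.subset_union_right).mul (haA.mono Set.subset_union_left)).mul hg).mul
        (ha₁A.inv.mono Set.subset_union_left)).mul (hb₂B.inv.mono Set.subset_union_right) j
        (by simp [hj, hjB])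
  have h1 := hℓ.map_mul_le a⁻¹ (b₁⁻¹ * ((b₁ * a * g * a₁⁻¹ * b₂⁻¹) * (b₂ * a₁)))
  have h2 := hℓ.map_mul_le b₁⁻¹ ((b₁ * a * g * a₁⁻¹ * b₂⁻¹) * (b₂ * a₁))
  have h3 := hℓ.map_mul_le (b₁ * a * g * a₁⁻¹ * b₂⁻¹) (b₂ * a₁)
  have h4 := hℓ.map_mul_le b₂ a₁
  rw [show a⁻¹ * (b₁⁻¹ * ((b₁ * a * g * a₁⁻¹ * b₂⁻¹) * (b₂ * a₁))) = g by group] at h1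
  linarith [hK _ haA.inv, hK' _ hb₁B.inv, hK _ hh, hK' _ hb₂B, hK _ ha₁A]

end Generation

section Branches

theorem uncountable_nat_arrow (α : Type*) [Nontrivial α] : Uncountable (ℕ → α) := by
  classical
  obtain ⟨x, y, hxy⟩ := exists_pair_ne α
  refine ⟨fun h => ?_⟩
  obtain ⟨f, hf⟩ := exists_injective_nat (ℕ → α)
  refine Function.cantor_injective (fun s : Set ℕ => f fun n => if n ∈ s then x else y)
    fun s t hst => ?_
  ext n
  have := congrFun (hf hst) n
  by_cases h1 : n ∈ s <;> by_cases h2 : n ∈ t <;> simp_all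

/-- Index set for a Hilbert basis containing the nodes of the binary tree, a spare pair of
sequences, and one more sequence. -/
abbrev TreeIndex : Type := (List Bool ⊕ (ℕ ⊕ ℕ)) ⊕ ℕ

/-- The node at level `n` of the branch `α` of the binary tree. -/
def branchNode (α : ℕ → Bool) (n : ℕ) : List Bool := (List.range n).map α

@[simp]
theorem length_branchNode (α : ℕ → Bool) (n : ℕ) : (branchNode α n).length = n := by
  simp [branchNode]

theorem branchNode_eq_iff {α β : ℕ → Bool} {n : ℕ} :
    branchNode α n = branchNode β n ↔ ∀ i < n, α i = β i := by
  simp [branchNode]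

/-- The involution exchanging the last sequence of indices with the nodes of a branch. -/
def branchSwap (α : ℕ → Bool) : TreeIndex → TreeIndex
  | .inl (.inl l) => if branchNode α l.length = l then .inr l.length else .inl (.inl l)
  | .inl (.inr x) => .inl (.inr x)
  | .inr n => .inl (.inl (branchNode α n))

theorem branchSwap_involutive (α : ℕ → Bool) : Function.Involutive (branchSwap α) := by
  rintro ((l | x) | n)
  · by_cases h : branchNode α l.length = l <;> simp [branchSwap, h]
  · rfl
  · simp [branchSwap]

theorem branchSwap_mem_range_inl_iff {α β : ℕ → Bool} {n : ℕ} :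
    branchSwap β (branchSwap α (.inr n)) ∈ Set.range (Sum.inl : _ → TreeIndex) ↔
      ∃ i < n, α i ≠ β i := by
  have h : branchNode β n = branchNode α n ↔ ∀ i < n, α i = β i := by
    rw [eq_comm, branchNode_eq_iff]
  by_cases h' : branchNode β n = branchNode α n
  · simpa [branchSwap, h'] using h.1 h'
  · simpa [branchSwap, h'] using mt h.2 h'

variable {H : Type*} [NormedAddCommGroup H] [InnerProductSpace ℂ H] [CompleteSpace H]
  [TopologicalSpace.SeparableSpace H] {ℓ : (H ≃ₗᵢ[ℂ] H) → ℝ}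

/-- If a separable length is bounded on the unitary group of the closed span of an infinite
coinfinite part of a Hilbert basis, then it is bounded on the pointwise stabilizer of a finite
set. -/
theorem IsSeparableLength.exists_le_of_fixes_finite (hℓ : IsSeparableLength ℓ)
    (b : HilbertBasis TreeIndex ℂ H) {K δ : ℝ} (hδ : 0 < δ)
    (hK : ∀ g, FixesOutside b (Set.range Sum.inl) g → ℓ g ≤ K) :
    ∃ k : ℕ, ∀ g : H ≃ₗᵢ[ℂ] H, (∀ n ≤ k, g (b (.inr n)) = b (.inr n)) → ℓ g ≤ 5 * K + 8 * δ := by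
  classical
  have hperm : ∀ α : ℕ → Bool, ∃ u : H ≃ₗᵢ[ℂ] H, ∀ j, u (b j) = b (branchSwap α j) := fun α => by
    obtain ⟨c, hc⟩ := b.exists_reindex (branchSwap_involutive α).toPerm
    obtain ⟨u, hu⟩ := b.exists_linearIsometryEquiv c
    exact ⟨u, fun j => by rw [hu, hc, Function.Involutive.coe_toPerm]⟩
  choose u hu using hperm
  have hu' : ∀ α j, (u α)⁻¹ (b j) = b (branchSwap α j) := fun α j => by
    nth_rewrite 1 [← branchSwap_involutive α j]
    rw [← hu]
    simp
  have := uncountable_nat_arrow Bool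
  obtain ⟨α, β, hαβ, hle⟩ := hℓ.exists_pair u hδ
  set h := (u α)⁻¹ * u β
  have hh : ∀ j, h (b j) = b (branchSwap α (branchSwap β j)) := fun j => by
    simp only [h, LinearIsometryEquiv.coe_mul, Function.comp_apply, hu, hu']
  let B : Set TreeIndex := {j | branchSwap β (branchSwap α j) ∈ Set.range Sum.inl}
  have hKB : ∀ g, FixesOutside b B g → ℓ g ≤ K + 4 * δ := by
    intro g hg
    have h1 := hK (h⁻¹ * g * h) fun j hj => by
      have h2 := hg (branchSwap α (branchSwap β j)) (by
        simpa [B, branchSwap_involutive α _, branchSwap_involutive β _] using hj)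
      simp only [LinearIsometryEquiv.coe_mul, Function.comp_apply]
      rw [hh, h2, ← hh]
      simp
    have h3 := hℓ.map_mul_le h ((h⁻¹ * g * h) * h⁻¹)
    have h4 := hℓ.map_mul_le (h⁻¹ * g * h) h⁻¹
    rw [show h * ((h⁻¹ * g * h) * h⁻¹) = g by group] at h3
    rw [hℓ.map_inv] at h4
    linarith
  have hex : ∃ n, α n ≠ β n := by
    by_contra! hcon
    exact hαβ (funext hcon)
  have hfind : ∀ n, (.inr n : TreeIndex) ∈ B ↔ Nat.find hex < n := fun n =>
    branchSwap_mem_range_inl_iff.trans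
      ⟨fun ⟨i, hi, hne⟩ => (Nat.find_min' hex hne).trans_lt hi,
        fun hn => ⟨_, hn, Nat.find_spec hex⟩⟩
  refine ⟨Nat.find hex, fun g hg => ?_⟩
  have hspare : ∀ x, (.inl (.inr x) : TreeIndex) ∈ B := fun x => ⟨_, rfl⟩
  have := hℓ.le_of_fixesOutside_union hK hKB (c := fun n => .inl (.inr (.inl n)))
    (d := fun n => .inl (.inr (.inr n))) (f := fun n => .inr (Nat.find hex + 1 + n))
    (fun m n hmn => by simpa using hmn) (fun m n hmn => by simpa using hmn)
    (fun m n hmn => by simpa using hmn) (fun m n => by simp) (fun n => ⟨_, rfl⟩)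
    (fun n => hspare _) (fun n => ⟨_, rfl⟩) (fun n => hspare _) (by
      ext (j | n)
      · simp
      · simp only [Set.mem_range, Sum.inr.injEq, Set.mem_sdiff, hfind]
        constructor
        · rintro ⟨m, rfl⟩
          exact ⟨by omega, by simp⟩
        · rintro ⟨hn, -⟩
          exact ⟨n - (Nat.find hex + 1), by omega⟩) (g := g) (by
      rintro (j | n) hj
      · exact (hj (Or.inl ⟨j, rfl⟩)).elim
      · refine hg n (not_lt.1 fun hn => hj (Or.inr ((hfind n).2 hn))))
  linarith

end Branches

section Amplification

theorem LinearIsometryEquiv.inv_apply_eq {E : Type*} [NormedAddCommGroup E]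
    [InnerProductSpace ℂ E] {g : E ≃ₗᵢ[ℂ] E} {x y : E} (h : g x = y) : g⁻¹ y = x :=
  h ▸ g.symm_apply_apply x

variable {H : Type*} [NormedAddCommGroup H] [InnerProductSpace ℂ H] {I Y : Type*}
  [NormedAddCommGroup Y] [InnerProductSpace ℂ Y]

/-- The isometric copies `T q` of the space `Y` form an orthogonal decomposition of `H`. -/
structure IsAmplification (T : I → Y →ₗᵢ[ℂ] H) : Prop where
  inner_eq_zero : ∀ q q', q ≠ q' → ∀ y y', ⟪T q y, T q' y'⟫_ℂ = 0
  eq_zero : ∀ x, (∀ q y, ⟪T q y, x⟫_ℂ = 0) → x = 0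

variable {T : I → Y →ₗᵢ[ℂ] H}

theorem IsAmplification.eq_of_inner (hT : IsAmplification T) {x x' : H}
    (h : ∀ q y, ⟪T q y, x⟫_ℂ = ⟪T q y, x'⟫_ℂ) : x = x' :=
  sub_eq_zero.1 <| hT.eq_zero _ fun q y => by rw [inner_sub_right, h, sub_self]

theorem IsAmplification.eq_of_apply (hT : IsAmplification T) {u u' : H ≃ₗᵢ[ℂ] H}
    (h : ∀ q y, u (T q y) = u' (T q y)) : u = u' := by
  have h' : u'⁻¹ * u = 1 := LinearIsometryEquiv.ext fun x => hT.eq_of_inner fun q y => by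
    have hq : (u'⁻¹ * u) (T q y) = T q y := by simp [h]
    exact (congrArg (fun z => ⟪z, (u'⁻¹ * u) x⟫_ℂ) hq.symm).trans ((u'⁻¹ * u).inner_map_map _ _)
  exact (inv_mul_eq_one.1 h').symm

theorem IsAmplification.comp (hT : IsAmplification T) (σ : Equiv.Perm I) (V : I → Y ≃ₗᵢ[ℂ] Y) :
    IsAmplification fun q => (T (σ q)).comp (V q).toLinearIsometry where
  inner_eq_zero q q' h y y' := hT.inner_eq_zero _ _ (σ.injective.ne h) _ _
  eq_zero x hx := hT.eq_zero x fun q y => by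
    simpa using hx (σ.symm q) ((V (σ.symm q)).symm y)

variable [CompleteSpace H] [CompleteSpace Y]

theorem IsAmplification.isHilbertSum (hT : IsAmplification T) :
    IsHilbertSum ℂ (fun _ : I => Y) T := by
  refine IsHilbertSum.mk (fun q q' h y y' => hT.inner_eq_zero q q' h y y') (top_le_iff.2 ?_)
  rw [Submodule.topologicalClosure_eq_top_iff, Submodule.eq_bot_iff]
  exact fun x hx => hT.eq_zero x fun q y =>
    hx _ (Submodule.mem_iSup_of_mem q (LinearMap.mem_range_self _ y))

/-- The block permutation operators. -/
theorem IsAmplification.exists_unitary (hT : IsAmplification T) (σ : Equiv.Perm I)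
    (V : I → Y ≃ₗᵢ[ℂ] Y) : ∃ u : H ≃ₗᵢ[ℂ] H, ∀ q y, u (T q y) = T (σ q) (V q y) := by
  classical
  have h := hT.isHilbertSum
  have h' := (hT.comp σ V).isHilbertSum
  refine ⟨h.linearIsometryEquiv.trans h'.linearIsometryEquiv.symm, fun q y => ?_⟩
  rw [LinearIsometryEquiv.trans_apply, ← h.linearIsometryEquiv_symm_apply_single y,
    LinearIsometryEquiv.apply_symm_apply, h'.linearIsometryEquiv_symm_apply_single]
  rfl

theorem IsAmplification.mem_range (hT : IsAmplification T) {p : I} {x : H} :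
    x ∈ LinearMap.range (T p).toLinearMap ↔ ∀ q ≠ p, ∀ y, ⟪T q y, x⟫_ℂ = 0 := by
  constructor
  · rintro ⟨z, rfl⟩ q hq y
    exact hT.inner_eq_zero q p hq y z
  · intro hx
    let z := (T p).toContinuousLinearMap.adjoint x
    refine ⟨z, hT.eq_of_inner fun q y => ?_⟩
    by_cases hq : q = p
    · subst hq
      have h1 := (T q).inner_map_map y z
      have h2 := (T q).toContinuousLinearMap.adjoint_inner_right y x
      exact h1.trans h2
    · rw [hx q hq]
      exact hT.inner_eq_zero q p hq y z

theorem IsAmplification.exists_block (hT : IsAmplification T) {p : I} {k : H ≃ₗᵢ[ℂ] H}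
    (hk : ∀ q ≠ p, ∀ y, k (T q y) = T q y) : ∃ u : Y ≃ₗᵢ[ℂ] Y, ∀ y, k (T p y) = T p (u y) := by
  let R := LinearMap.range (T p).toLinearMap
  have hmap : R.map k.toLinearEquiv.toLinearMap = R := by
    have h : ∀ x, k x ∈ R ↔ x ∈ R := fun x => by
      rw [hT.mem_range, hT.mem_range]
      refine forall₃_congr fun q hq y => ?_
      rw [← hk q hq y, k.inner_map_map, hk q hq y]
    ext x
    constructor
    · rintro ⟨x, hx, rfl⟩
      exact (h x).2 hx
    · intro hx
      exact ⟨k.symm x, (h _).1 (by simpa using hx), by simp⟩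
  let e := (T p).equivRange
  refine ⟨e.trans ((k.submoduleMap R).trans ((LinearIsometryEquiv.ofEq _ _ hmap).trans e.symm)),
    fun y => ?_⟩
  exact (congrArg Subtype.val
    (e.apply_symm_apply (LinearIsometryEquiv.ofEq _ _ hmap (k.submoduleMap R (e y))))).symm

omit [CompleteSpace H] [CompleteSpace Y] in
theorem HilbertBasis.clm_ext {J F : Type*} [NormedAddCommGroup F] [InnerProductSpace ℂ F]
    (b : HilbertBasis J ℂ H) {f g : H →L[ℂ] F} (h : ∀ j, f (b j) = g (b j)) : f = g :=
  ContinuousLinearMap.ext_on (s := Set.range b)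
    (Submodule.dense_iff_topologicalClosure_eq_top.2 b.dense_span) (by rintro _ ⟨j, rfl⟩; exact h j)

omit [CompleteSpace Y] in
theorem HilbertBasis.exists_isAmplification {J : Type*} (b : HilbertBasis (I × J) ℂ H)
    (b₀ : HilbertBasis J ℂ Y) :
    ∃ T : I → Y →ₗᵢ[ℂ] H, IsAmplification T ∧ ∀ q j, T q (b₀ j) = b (q, j) := by
  classical
  have hex : ∀ q, ∃ t : Y →ₗᵢ[ℂ] H, ∀ j, t (b₀ j) = b (q, j) := fun q => by
    have h := (b.orthonormal.comp (Prod.mk q) (Prod.mk_right_injective q)).orthogonalFamily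
    refine ⟨h.linearIsometry.comp b₀.repr.toLinearIsometry, fun j => ?_⟩
    simp [HilbertBasis.repr_self]
  choose t ht using hex
  refine ⟨t, ⟨fun q q' hq y y' => ?_, fun x hx => ?_⟩, ht⟩
  · have h1 : ∀ j, innerSL ℂ (b (q, j)) ∘L (t q').toContinuousLinearMap = 0 := fun j =>
      b₀.clm_ext fun j' => by
        simpa [ht] using b.inner_eq_zero (i := (q, j)) (j := (q', j')) (by simp [hq])
    have h2 : innerSL ℂ (t q' y') ∘L (t q).toContinuousLinearMap = 0 :=
      b₀.clm_ext fun j => by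
        have := DFunLike.congr_fun (h1 j) y'
        simpa [ht] using inner_eq_zero_symm.1 this
    exact inner_eq_zero_symm.1 (DFunLike.congr_fun h2 y)
  · have : x ∈ (Submodule.span ℂ (Set.range b))ᗮ := mem_span_range_orthogonal_iff.2 fun ⟨q, j⟩ => by
      rw [← ht, hx]
    simpa [b.orthogonal_span_eq_bot] using this

end Amplification

section Commutators

variable {H : Type*} [NormedAddCommGroup H] [InnerProductSpace ℂ H] [CompleteSpace H] {Y : Type*}
  [NormedAddCommGroup Y] [InnerProductSpace ℂ Y] [CompleteSpace Y] {ℓ : (H ≃ₗᵢ[ℂ] H) → ℝ}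
  {T : ℕ × ℕ × ℤ → Y →ₗᵢ[ℂ] H}

theorem IsSeparableLength.exists_full_block (hℓ : IsSeparableLength ℓ) (hT : IsAmplification T)
    {δ : ℝ} (hδ : 0 < δ) : ∃ n, ∀ V : ℕ × ℤ → Y ≃ₗᵢ[ℂ] Y, ∃ f, ℓ f ≤ 2 * δ ∧
      ∀ x y, f (T (n, x) y) = T (n, x) (V x y) := by
  obtain ⟨s, hs⟩ := hℓ.exists_seq δ hδ
  obtain ⟨n, hn⟩ : ∃ n, ∀ V : ℕ × ℤ → Y ≃ₗᵢ[ℂ] Y, ∃ f, ℓ ((s n)⁻¹ * f) < δ ∧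
      ∀ x y, f (T (n, x) y) = T (n, x) (V x y) := by
    by_contra! h
    choose V hV using h
    obtain ⟨f, hf⟩ := hT.exists_unitary (Equiv.refl _) fun q => V q.1 q.2
    obtain ⟨n, hn⟩ := hs f
    obtain ⟨x, y, hxy⟩ := hV n f hn
    exact hxy (hf (n, x) y)
  refine ⟨n, fun V => ?_⟩
  obtain ⟨f₁, hf₁, h₁⟩ := hn fun _ => 1
  obtain ⟨f, hf, h⟩ := hn V
  refine ⟨f₁⁻¹ * f, ?_, fun x y => ?_⟩
  · have h2 := hℓ.map_mul_le ((s n)⁻¹ * f₁)⁻¹ ((s n)⁻¹ * f)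
    rw [hℓ.map_inv, show ((s n)⁻¹ * f₁)⁻¹ * ((s n)⁻¹ * f) = f₁⁻¹ * f by group] at h2
    linarith
  · rw [LinearIsometryEquiv.coe_mul, Function.comp_apply, h]
    exact LinearIsometryEquiv.inv_apply_eq (h₁ x _)

theorem IsSeparableLength.exists_shift (hℓ : IsSeparableLength ℓ) (hT : IsAmplification T) (n : ℕ)
    {δ : ℝ} (hδ : 0 < δ) : ∃ (h : H ≃ₗᵢ[ℂ] H) (d : ℕ → ℤ) (m : ℕ), ℓ h ≤ 2 * δ ∧ d m ≠ 0 ∧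
      (∀ n' ≠ n, ∀ x y, h (T (n', x) y) = T (n', x) y) ∧
      ∀ m i y, h (T (n, m, i) y) = T (n, m, i + d m) y := by
  let σ : (ℕ → ℤ) → Equiv.Perm (ℕ × ℕ × ℤ) := fun α =>
    { toFun := fun q => (q.1, q.2.1, q.2.2 + if q.1 = n then α q.2.1 else 0)
      invFun := fun q => (q.1, q.2.1, q.2.2 - if q.1 = n then α q.2.1 else 0)
      left_inv := fun q => by simp
      right_inv := fun q => by simp }
  choose u hu using fun α => hT.exists_unitary (σ α) fun _ => 1
  have := uncountable_nat_arrow ℤ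
  obtain ⟨α, β, hαβ, hle⟩ := hℓ.exists_pair u hδ
  obtain ⟨m, hm⟩ := Function.ne_iff.1 hαβ
  have key : ∀ q y, ((u α)⁻¹ * u β) (T q y) = T ((σ α).symm (σ β q)) y := fun q y => by
    rw [LinearIsometryEquiv.coe_mul, Function.comp_apply, hu]
    refine LinearIsometryEquiv.inv_apply_eq ?_
    rw [hu, Equiv.apply_symm_apply]
  refine ⟨(u α)⁻¹ * u β, fun m => β m - α m, m, hle, sub_ne_zero.2 hm.symm, ?_, ?_⟩
  · rintro n' hn' x y
    rw [key]
    simp [σ, hn']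
  · intro m i y
    rw [key]
    simp [σ, add_sub_assoc]

/-- Every unitary of some block is a commutator of two elements of small length. -/
theorem IsSeparableLength.exists_le_of_fixes_blocks (hℓ : IsSeparableLength ℓ)
    (hT : IsAmplification T) {δ : ℝ} (hδ : 0 < δ) :
    ∃ p, ∀ k : H ≃ₗᵢ[ℂ] H, (∀ q ≠ p, ∀ y, k (T q y) = T q y) → ℓ k ≤ 8 * δ := by
  classical
  obtain ⟨n, hn⟩ := hℓ.exists_full_block hT hδ
  obtain ⟨h, d, m₀, hhδ, hd, hh, hhn⟩ := hℓ.exists_shift hT n hδ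
  refine ⟨(n, m₀, 0), fun k hk => ?_⟩
  obtain ⟨u, hu⟩ := hT.exists_block hk
  let V : ℕ × ℤ → Y ≃ₗᵢ[ℂ] Y := fun x => if x.1 = m₀ ∧ ∃ r : ℕ, x.2 = r * d m₀ then u else 1
  obtain ⟨f, hfδ, hf⟩ := hn V
  have hf' : ∀ x y, f⁻¹ (T (n, x) y) = T (n, x) ((V x)⁻¹ y) := fun x y =>
    LinearIsometryEquiv.inv_apply_eq ((hf x _).trans (congrArg _ ((V x).apply_symm_apply y)))
  have hh' : ∀ n' ≠ n, ∀ x y, h⁻¹ (T (n', x) y) = T (n', x) y := fun n' hn' x y =>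
    LinearIsometryEquiv.inv_apply_eq (hh n' hn' x y)
  have hhn' : ∀ m i y, h⁻¹ (T (n, m, i) y) = T (n, m, i - d m) y := fun m i y =>
    LinearIsometryEquiv.inv_apply_eq (by rw [hhn, sub_add_cancel])
  have hfix : ∀ z, (∀ x y, ⟪T (n, x) y, z⟫_ℂ = 0) → h z = z := fun z hz =>
    hT.eq_of_inner fun q y => by
      have h1 : ⟪T q y, h z⟫_ℂ = ⟪h⁻¹ (T q y), z⟫_ℂ := by
        rw [← h.inner_map_map (h⁻¹ (T q y))]
        simp
      obtain ⟨n', m, i⟩ := q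
      by_cases hn' : n' = n
      · subst hn'
        rw [h1, hhn', hz, hz]
      · rw [h1, hh' n' hn']
  have hkey : f * h * f⁻¹ * h⁻¹ = k := hT.eq_of_apply fun q y => by
    obtain ⟨n', m, i⟩ := q
    simp only [LinearIsometryEquiv.coe_mul, Function.comp_apply]
    by_cases hn' : n' = n
    · subst hn'
      rw [hhn', hf', hhn, sub_add_cancel, hf]
      by_cases hm : m = m₀
      · subst hm
        by_cases hi : i = 0
        · have hV : V (m, 0 - d m) = 1 := if_neg fun ⟨_, r, hr⟩ => hd (by
            have : (r + 1 : ℤ) * d m = 0 := by linear_combination -hr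
            exact (mul_eq_zero.1 this).resolve_left (by positivity))
          have hV' : V (m, 0) = u := if_pos ⟨rfl, 0, by simp⟩
          rw [hi, hV, hV', hu]
          simp
        · have hV : V (m, i - d m) = V (m, i) := by
            refine if_congr (and_congr_right fun _ => ⟨fun ⟨r, hr⟩ => ⟨r + 1, ?_⟩, ?_⟩) rfl rfl
            · push_cast
              linear_combination hr
            · rintro ⟨_ | r, hr⟩
              · exact (hi (by simpa using hr)).elim
              · refine ⟨r, ?_⟩
                push_cast at hr ⊢
                linear_combination hr
          rw [hV, hk _ (by simp [hi])]
          exact congrArg _ ((V (m, i)).apply_symm_apply y)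
      · have hV : ∀ i, V (m, i) = 1 := fun i => if_neg fun hi => hm hi.1
        rw [hV, hV, hk _ (by simp [hm])]
        simp
    · rw [hh' n' hn', hfix, hk _ (by simp [hn'])]
      · simp
      · intro x z
        rw [← f.inner_map_map, hf]
        simpa using hT.inner_eq_zero _ _ (by simp [Ne.symm hn']) _ _
  have h1 := hℓ.map_mul_le (f * h * f⁻¹) h⁻¹
  have h2 := hℓ.map_mul_le (f * h) f⁻¹
  have h3 := hℓ.map_mul_le f h
  rw [hℓ.map_inv] at h1 h2
  rw [hkey] at h1
  linarith

end Commutators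

section SmallLengths

variable {H : Type*} [NormedAddCommGroup H] [InnerProductSpace ℂ H] [CompleteSpace H]
  [TopologicalSpace.SeparableSpace H] {ℓ : (H ≃ₗᵢ[ℂ] H) → ℝ}

theorem exists_equiv_prod_inl {I : Type*} [Countable I] [Nontrivial I] (p : I) :
    ∃ e : TreeIndex ≃ I × ℕ, ∀ q ≠ p, ∀ j, ∃ n, e (.inr n) = (q, j) := by
  classical
  obtain ⟨p', hp'⟩ := exists_ne p
  have : Infinite {x : I × ℕ // x.1 = p} :=
    .of_injective (fun n => ⟨(p, n), rfl⟩) fun m n h => by simpa using h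
  have : Infinite {x : I × ℕ // ¬ x.1 = p} :=
    .of_injective (fun n => ⟨(p', n), hp'⟩) fun m n h => by simpa using h
  obtain ⟨e₁⟩ := nonempty_equiv_of_countable (α := List Bool ⊕ (ℕ ⊕ ℕ))
    (β := {x : I × ℕ // x.1 = p})
  obtain ⟨e₂⟩ := nonempty_equiv_of_countable (α := ℕ) (β := {x : I × ℕ // ¬ x.1 = p})
  refine ⟨(e₁.sumCongr e₂).trans (Equiv.sumCompl _), fun q hq j => ⟨e₂.symm ⟨(q, j), hq⟩, ?_⟩⟩
  simp

theorem IsSeparableLength.exists_hilbertBasis (hℓ : IsSeparableLength ℓ)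
    (hinf : ¬ FiniteDimensional ℂ H) {δ : ℝ} (hδ : 0 < δ) :
    ∃ b : HilbertBasis TreeIndex ℂ H,
      ∀ g, FixesOutside b (Set.range Sum.inl) g → ℓ g ≤ 8 * δ := by
  obtain ⟨b₀⟩ := exists_hilbertBasis_nat hinf
  obtain ⟨e⟩ := nonempty_equiv_of_countable (α := (ℕ × ℕ × ℤ) × ℕ) (β := ℕ)
  obtain ⟨b, -⟩ := b₀.exists_reindex e
  obtain ⟨T, hT, hTb⟩ := b.exists_isAmplification b₀
  obtain ⟨p, hp⟩ := hℓ.exists_le_of_fixes_blocks hT hδ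
  obtain ⟨e', he'⟩ := exists_equiv_prod_inl p
  obtain ⟨c, hc⟩ := b.exists_reindex e'
  refine ⟨c, fun g hg => hp g fun q hq y => ?_⟩
  refine DFunLike.congr_fun (b₀.clm_ext (f := g.toContinuousLinearEquiv.toContinuousLinearMap ∘L
    (T q).toContinuousLinearMap) (g := (T q).toContinuousLinearMap) fun j => ?_) y
  obtain ⟨n, hn⟩ := he' q hq j
  have h := hg (.inr n) (by simp)
  rw [hc, hn, ← hTb] at h
  exact h

omit [CompleteSpace H] [TopologicalSpace.SeparableSpace H] in
theorem exists_finite_norm_sub_le (F : Submodule ℂ H) [FiniteDimensional ℂ F] {η : ℝ}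
    (hη : 0 < η) : ∃ t : Set H, t.Finite ∧ ∃ r > 0, ∀ g : H ≃ₗᵢ[ℂ] H,
      (∀ v ∈ t, ‖g v - v‖ < r) → ∀ x ∈ F, ‖g x - x‖ ≤ η * ‖x‖ := by
  let o := stdOrthonormalBasis ℂ F
  let N := Module.finrank ℂ F
  refine ⟨Set.range fun i => (o i : H), Set.finite_range _, η / (N + 1), by positivity,
    fun g hg x hx => ?_⟩
  have h1 : ∑ i, ⟪o i, (⟨x, hx⟩ : F)⟫_ℂ • (o i : H) = x := by
    have := congrArg Subtype.val (o.sum_repr' ⟨x, hx⟩)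
    simpa using this
  have h2 : g x - x = ∑ i, ⟪o i, (⟨x, hx⟩ : F)⟫_ℂ • (g (o i) - (o i : H)) := by
    simp only [smul_sub, Finset.sum_sub_distrib, h1]
    nth_rewrite 1 [← h1]
    simp only [map_sum, map_smul]
  calc ‖g x - x‖ ≤ ∑ i, ‖⟪o i, (⟨x, hx⟩ : F)⟫_ℂ • (g (o i) - (o i : H))‖ := h2 ▸ norm_sum_le _ _
    _ ≤ ∑ i : Fin N, ‖x‖ * (η / (N + 1)) := Finset.sum_le_sum fun i _ => by
        rw [norm_smul]
        refine mul_le_mul ?_ (hg _ ⟨i, rfl⟩).le (norm_nonneg _) (norm_nonneg _)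
        simpa using norm_inner_le_norm (𝕜 := ℂ) (o i) (⟨x, hx⟩ : F)
    _ = (N / (N + 1)) * (η * ‖x‖) := by
        rw [Finset.sum_const, Finset.card_univ, Fintype.card_fin, nsmul_eq_mul]
        ring
    _ ≤ η * ‖x‖ := mul_le_of_le_one_left (by positivity)
        ((div_le_one (by positivity)).2 (by linarith))

/-- Separable lengths on the unitary group are small near the identity. -/
theorem IsSeparableLength.exists_finite_lt (hℓ : IsSeparableLength ℓ)
    (hinf : ¬ FiniteDimensional ℂ H) {ε : ℝ} (hε : 0 < ε) : ∃ t : Set H, t.Finite ∧ ∃ r > 0,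
      ∀ g : H ≃ₗᵢ[ℂ] H, (∀ v ∈ t, ‖g v - v‖ < r) → ℓ g < ε := by
  have hδ : 0 < ε / 400 := by positivity
  obtain ⟨b, hb⟩ := hℓ.exists_hilbertBasis hinf hδ
  obtain ⟨k, hk⟩ := hℓ.exists_le_of_fixes_finite b hδ hb
  let F : Submodule ℂ H := Submodule.span ℂ ((fun n => b (.inr n)) '' Set.Iic k)
  have : FiniteDimensional ℂ F := FiniteDimensional.span_of_finite ℂ ((Set.finite_Iic k).image _)
  obtain ⟨η, hη, hηF⟩ := hℓ.exists_le_of_norm_sub_le (F := F) hinf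
    (fun g hg => hk g fun n hn => hg _ (Submodule.subset_span ⟨n, hn, rfl⟩)) hδ
  obtain ⟨t, ht, r, hr, htr⟩ := exists_finite_norm_sub_le F hη
  refine ⟨t, ht, r, hr, fun g hg => (hηF g (htr g hg)).trans_lt ?_⟩
  linarith

end SmallLengths

theorem isSeparableLength_dist {G X : Type*} [Group G] [MetricSpace X]
    [TopologicalSpace.SeparableSpace X] (a : G →* (X ≃ᵢ X)) (x : X) :
    IsSeparableLength fun g => dist (a g x) x := by
  have hmul : ∀ g h, a (g * h) x = a g (a h x) := fun g h => by rw [map_mul]; rfl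
  have hinv : ∀ g y, a g (a g⁻¹ y) = y := fun g y => by
    rw [map_inv]
    exact (a g).apply_symm_apply y
  have hdist : ∀ g y, dist (a g⁻¹ y) x = dist y (a g x) := fun g y => by
    rw [← (a g).dist_eq, hinv]
  refine ⟨fun g => (hdist g x).trans (dist_comm _ _), fun g h => ?_, fun δ hδ => ?_⟩
  · rw [hmul, add_comm, ← (a g).dist_eq (a h x)]
    exact dist_triangle _ _ _
  · have : Nonempty (Set.range fun g => a g x) := ⟨⟨_, 1, rfl⟩⟩
    have := UniformSpace.secondCountable_of_separable X
    choose s hs using fun n => (TopologicalSpace.denseSeq (Set.range fun g => a g x) n).2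
    refine ⟨s, fun g => ?_⟩
    obtain ⟨n, hn⟩ := Metric.denseRange_iff.1
      (TopologicalSpace.denseRange_denseSeq (Set.range fun g => a g x)) ⟨a g x, g, rfl⟩ δ hδ
    refine ⟨n, ?_⟩
    have hsn : a (s n) x = _ := hs n
    rw [hmul, hdist, hsn]
    exact hn

theorem continuous_apply_strongOperatorTopology {H : Type*} [NormedAddCommGroup H]
    [InnerProductSpace ℂ H] (v : H) :
    @Continuous _ _ (strongOperatorTopology ℂ H) _ fun u : H ≃ₗᵢ[ℂ] H => u v :=
  letI := strongOperatorTopology ℂ H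
  (continuous_apply v).comp continuous_induced_dom

/-- If `H` is an infinite-dimensional separable complex Hilbert space, then every action of
the unitary group `U(H)` by (surjective) isometries on a separable metric space `X`
(i.e. every group homomorphism `U(H) →* (X ≃ᵢ X)`) is continuous as a map
`U(H) × X → X`, where `U(H)` carries the strong operator topology. -/
theorem unitaryGroup_isometric_action_continuous
    {H : Type*} [NormedAddCommGroup H] [InnerProductSpace ℂ H] [CompleteSpace H]
    [TopologicalSpace.SeparableSpace H] (hinf : ¬ FiniteDimensional ℂ H)
    {X : Type*} [MetricSpace X] [TopologicalSpace.SeparableSpace X]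
    (a : (H ≃ₗᵢ[ℂ] H) →* (X ≃ᵢ X)) :
    @Continuous ((H ≃ₗᵢ[ℂ] H) × X) X
      (@instTopologicalSpaceProd _ _ (strongOperatorTopology ℂ H) _) _
      (fun p => a p.1 p.2) := by
  let := strongOperatorTopology ℂ H
  refine continuous_iff_continuousAt.2 fun ⟨g, x⟩ => Metric.tendsto_nhds.2 fun ε hε => ?_
  obtain ⟨t, ht, r, hr, htr⟩ :=
    (isSeparableLength_dist a x).exists_finite_lt hinf (half_pos hε)
  have h1 : ∀ᶠ g' in nhds g, ∀ v ∈ t, ‖g' v - g v‖ < r := (Filter.eventually_all_finite ht).2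
    fun v _ => by
      simpa only [dist_eq_norm] using Metric.tendsto_nhds.1
        (continuous_apply_strongOperatorTopology v).continuousAt r hr
  have h2 : ∀ᶠ x' in nhds x, dist x' x < ε / 2 := Metric.ball_mem_nhds x (half_pos hε)
  filter_upwards [h1.prod_nhds h2] with ⟨g', x'⟩ ⟨hg', hx'⟩
  have h3 : dist (a (g⁻¹ * g') x) x < ε / 2 := htr _ fun v hv => by
    rw [← g.norm_map, map_sub]
    simpa using hg' v hv
  have h4 : a g' x = a g (a (g⁻¹ * g') x) := by
    rw [← IsometryEquiv.mul_apply, ← map_mul, mul_inv_cancel_left]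
  calc dist (a g' x') (a g x) ≤ dist (a g' x') (a g' x) + dist (a g' x) (a g x) :=
        dist_triangle _ _ _
    _ = dist x' x + dist (a (g⁻¹ * g') x) x := by
        rw [(a g').dist_eq, h4, (a g).dist_eq]
    _ < ε := by linarith
end

section
/- Let H be an infinite-dimensional separable complex Hilbert space and let W be a symmetric countably syndetic subset of U(H). Then there exists a balanced closed subspace K of H such that the pointwise stabilizer G_K is contained in W^24 and W^120 contains a subset of the setwise stabilizer I_K of K that is an open neighborhood of the identity in I_K (with the strong operator topology). -/
open Pointwise Topology

/-- The pointwise stabilizer of a subspace `K` in the unitary group of `H`. -/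
def pointwiseStabilizer {𝕜 H : Type*} [RCLike 𝕜] [NormedAddCommGroup H]
    [InnerProductSpace 𝕜 H] (K : Submodule 𝕜 H) : Set (H ≃ₗᵢ[𝕜] H) :=
  {u | ∀ x ∈ K, u x = x}

/-- The setwise stabilizer of a subspace `K` in the unitary group of `H`. -/
def setwiseStabilizer {𝕜 H : Type*} [RCLike 𝕜] [NormedAddCommGroup H]
    [InnerProductSpace 𝕜 H] (K : Submodule 𝕜 H) : Set (H ≃ₗᵢ[𝕜] H) :=
  {u | K.map (u.toLinearEquiv : H →ₗ[𝕜] H) = K}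

theorem Orthonormal.countable_of_separableSpace {H ι : Type*} [NormedAddCommGroup H]
    [InnerProductSpace ℂ H] [TopologicalSpace.SeparableSpace H] {v : ι → H}
    (hv : Orthonormal ℂ v) : Countable ι := by
  have hdisj : Pairwise fun i j => Disjoint (Metric.ball (v i) (1 / 2)) (Metric.ball (v j) (1 / 2)) := by
    intro i j hij
    apply Metric.ball_disjoint_ball
    have h1 : ‖v i - v j‖ ^ 2 = 2 := by
      rw [@norm_sub_sq ℂ, hv.2 hij, hv.1 i, hv.1 j]
      norm_num
    rw [dist_eq_norm]
    nlinarith [norm_nonneg (v i - v j)]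
  have := Set.PairwiseDisjoint.countable_of_isOpen (a := (Set.univ : Set ι))
    (s := fun i => Metric.ball (v i) (1 / 2)) (fun i _ j _ hij => hdisj hij)
    (fun i _ => Metric.isOpen_ball) (fun i _ => ⟨v i, Metric.mem_ball_self (by norm_num)⟩)
  exact Set.countable_univ_iff.mp this

theorem HilbertBasis.finiteDimensional {H ι : Type*} [NormedAddCommGroup H]
    [InnerProductSpace ℂ H] [Finite ι] (b : HilbertBasis ι ℂ H) : FiniteDimensional ℂ H := by
  have := Fintype.ofFinite ι
  exact b.toOrthonormalBasis.toBasis.finiteDimensional_of_finite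

theorem HilbertBasis.exists_of_infinite {H : Type*} [NormedAddCommGroup H]
    [InnerProductSpace ℂ H] [CompleteSpace H] [TopologicalSpace.SeparableSpace H]
    (hinf : ¬ FiniteDimensional ℂ H) (ι : Type*) [Countable ι] [Infinite ι] :
    Nonempty (HilbertBasis ι ℂ H) := by
  obtain ⟨w, b, -⟩ := exists_hilbertBasis ℂ H
  have : Countable w := b.orthonormal.countable_of_separableSpace
  have : Infinite w := by
    by_contra h
    rw [not_infinite_iff_finite] at h
    exact hinf b.finiteDimensional
  obtain ⟨e⟩ := nonempty_equiv_of_countable (α := ι) (β := w)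
  refine ⟨HilbertBasis.mk (b.orthonormal.comp e e.injective) ?_⟩
  rw [EquivLike.range_comp, b.dense_span]

theorem LinearIsometryEquiv.nonempty_of_infinite {H H' : Type*} [NormedAddCommGroup H]
    [InnerProductSpace ℂ H] [CompleteSpace H] [TopologicalSpace.SeparableSpace H]
    [NormedAddCommGroup H'] [InnerProductSpace ℂ H'] [CompleteSpace H']
    [TopologicalSpace.SeparableSpace H']
    (h : ¬ FiniteDimensional ℂ H) (h' : ¬ FiniteDimensional ℂ H') : Nonempty (H ≃ₗᵢ[ℂ] H') := by
  obtain ⟨b⟩ := HilbertBasis.exists_of_infinite h ℕ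
  obtain ⟨b'⟩ := HilbertBasis.exists_of_infinite h' ℕ
  exact ⟨b.repr.trans b'.repr.symm⟩

/-- An infinite-dimensional separable Hilbert space is a Hilbert sum of countably many copies
of itself. -/
theorem LinearIsometryEquiv.nonempty_lp_self {H : Type*} [NormedAddCommGroup H]
    [InnerProductSpace ℂ H] [CompleteSpace H] [TopologicalSpace.SeparableSpace H]
    (hinf : ¬ FiniteDimensional ℂ H) (ι : Type*) [Countable ι] [Nonempty ι] :
    Nonempty (H ≃ₗᵢ[ℂ] lp (fun _ : ι => H) 2) := by
  classical
  obtain ⟨b⟩ := HilbertBasis.exists_of_infinite hinf ℕ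
  obtain ⟨c⟩ := HilbertBasis.exists_of_infinite hinf (ι × ℕ)
  have hv : Orthonormal ℂ
      (fun p : ι × ℕ => (lp.single 2 p.1 (b p.2) : lp (fun _ : ι => H) 2)) := by
    rw [orthonormal_iff_ite]
    rintro ⟨i, m⟩ ⟨j, n⟩
    rw [lp.inner_single_left]
    by_cases hij : i = j
    · subst hij
      simp [orthonormal_iff_ite.mp b.orthonormal]
    · simp [hij, lp.single_apply]
  refine ⟨c.repr.trans (HilbertBasis.mkOfOrthogonalEqBot hv ?_).repr.symm⟩
  rw [Submodule.eq_bot_iff]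
  intro f hf
  ext i
  refine b.repr.injective ?_
  ext n
  rw [b.repr_apply_apply]
  have := (Submodule.mem_orthogonal _ _).mp hf _ (Submodule.subset_span ⟨(i, n), rfl⟩)
  rw [lp.inner_single_left] at this
  simp [this]

section Monomial

variable {ι E : Type*} [NormedAddCommGroup E] [InnerProductSpace ℂ E]

theorem memℓp_monomial (σ : Equiv.Perm ι) (d : ι → (E ≃ₗᵢ[ℂ] E)) (f : lp (fun _ : ι => E) 2) :
    Memℓp (fun i => d i (f (σ.symm i))) 2 := by
  have h := lp.memℓp f
  rw [memℓp_gen_iff (by norm_num)] at h ⊢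
  simpa [Function.comp_def] using
    (σ.symm.summable_iff (f := fun i => ‖f i‖ ^ (2 : ENNReal).toReal)).mpr h

/-- The monomial operator on a Hilbert sum of copies of `E`: permute the blocks by `σ`, then apply
`d i` in the block `i`. -/
noncomputable def lpMonomial (σ : Equiv.Perm ι) (d : ι → (E ≃ₗᵢ[ℂ] E)) :
    lp (fun _ : ι => E) 2 ≃ₗᵢ[ℂ] lp (fun _ : ι => E) 2 where
  toFun f := ⟨fun i => d i (f (σ.symm i)), memℓp_monomial σ d f⟩
  map_add' f g := by
    ext i
    exact (congrArg (d i) (by simp)).trans (map_add (d i) _ _)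
  map_smul' c f := by ext i; simp
  invFun f := ⟨fun i => (d (σ i)).symm (f (σ i)),
    memℓp_monomial σ.symm (fun i => (d (σ i)).symm) f⟩
  left_inv f := by ext i; simp
  right_inv f := by ext i; simp
  norm_map' f := by
    rw [lp.norm_eq_tsum_rpow (by norm_num), lp.norm_eq_tsum_rpow (by norm_num)]
    congr 1
    simpa using σ.symm.tsum_eq (fun i => ‖f i‖ ^ (2 : ENNReal).toReal)

variable {H : Type*} [NormedAddCommGroup H] [InnerProductSpace ℂ H]

/-- The monomial operator on a space identified with a Hilbert sum of copies of `E`. -/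
noncomputable def monomialOp (Φ : H ≃ₗᵢ[ℂ] lp (fun _ : ι => E) 2) (σ : Equiv.Perm ι)
    (d : ι → (E ≃ₗᵢ[ℂ] E)) : H ≃ₗᵢ[ℂ] H :=
  Φ.trans ((lpMonomial σ d).trans Φ.symm)

theorem monomialOp_coord (Φ : H ≃ₗᵢ[ℂ] lp (fun _ : ι => E) 2) (σ : Equiv.Perm ι)
    (d : ι → (E ≃ₗᵢ[ℂ] E)) (x : H) (i : ι) :
    Φ (monomialOp Φ σ d x) i = d i (Φ x (σ.symm i)) := by
  simp [monomialOp, lpMonomial]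

theorem monomialOp_one_coord (Φ : H ≃ₗᵢ[ℂ] lp (fun _ : ι => E) 2)
    (d : ι → (E ≃ₗᵢ[ℂ] E)) (x : H) (i : ι) : Φ (monomialOp Φ 1 d x) i = d i (Φ x i) :=
  monomialOp_coord Φ 1 d x i

theorem coord_ext (Φ : H ≃ₗᵢ[ℂ] lp (fun _ : ι => E) 2) {x y : H} (h : ∀ i, Φ x i = Φ y i) :
    x = y :=
  Φ.injective (lp.ext (funext h))

theorem monomialOp_mul (Φ : H ≃ₗᵢ[ℂ] lp (fun _ : ι => E) 2) (σ τ : Equiv.Perm ι)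
    (d e : ι → (E ≃ₗᵢ[ℂ] E)) :
    monomialOp Φ σ d * monomialOp Φ τ e =
      monomialOp Φ (σ * τ) (fun i => d i * e (σ.symm i)) := by
  ext x
  refine coord_ext Φ fun i => ?_
  simp only [LinearIsometryEquiv.coe_mul, Function.comp_apply, monomialOp_coord]
  rfl

theorem monomialOp_one (Φ : H ≃ₗᵢ[ℂ] lp (fun _ : ι => E) 2) : monomialOp Φ 1 1 = 1 := by
  ext x
  refine coord_ext Φ fun i => ?_
  simp [monomialOp_coord]
  rfl

theorem monomialOp_inv (Φ : H ≃ₗᵢ[ℂ] lp (fun _ : ι => E) 2) (σ : Equiv.Perm ι)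
    (d : ι → (E ≃ₗᵢ[ℂ] E)) :
    (monomialOp Φ σ d)⁻¹ = monomialOp Φ σ⁻¹ (fun i => (d (σ i))⁻¹) := by
  rw [inv_eq_iff_mul_eq_one, monomialOp_mul, ← monomialOp_one Φ]
  congr 1
  · simp
  · funext i
    simp

end Monomial

section Supported

variable {ι E H : Type*} [NormedAddCommGroup E] [InnerProductSpace ℂ E]
  [NormedAddCommGroup H] [InnerProductSpace ℂ H]

/-- The vectors whose block coordinates vanish outside `S`. -/
def supportedOn (Φ : H ≃ₗᵢ[ℂ] lp (fun _ : ι => E) 2) (S : Set ι) : Submodule ℂ H where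
  carrier := {x | ∀ i ∉ S, Φ x i = 0}
  add_mem' {x y} hx hy i hi := by simp [hx i hi, hy i hi]
  zero_mem' i _ := by simp
  smul_mem' c x hx i hi := by simp [hx i hi]

theorem orthogonal_supportedOn (Φ : H ≃ₗᵢ[ℂ] lp (fun _ : ι => E) 2) (S : Set ι) :
    (supportedOn Φ S)ᗮ = supportedOn Φ Sᶜ := by
  classical
  ext x
  rw [Submodule.mem_orthogonal]
  constructor
  · intro h i hi
    have hmem : Φ.symm (lp.single 2 i (Φ x i)) ∈ supportedOn Φ S := by
      intro j hj
      have : j ≠ i := by rintro rfl; exact hi hj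
      simp [this]
    have := h _ hmem
    rw [← Φ.inner_map_map, Φ.apply_symm_apply, lp.inner_single_left] at this
    exact inner_self_eq_zero.mp this
  · intro h y hy
    rw [← Φ.inner_map_map, lp.inner_eq_tsum]
    convert tsum_zero with i
    by_cases hi : i ∈ S
    · rw [h i (by simpa using hi), inner_zero_right]
    · rw [hy i hi, inner_zero_left]

theorem isClosed_supportedOn (Φ : H ≃ₗᵢ[ℂ] lp (fun _ : ι => E) 2) (S : Set ι) :
    IsClosed (supportedOn Φ S : Set H) := by
  rw [← compl_compl S, ← orthogonal_supportedOn]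
  exact Submodule.isClosed_orthogonal _

theorem not_finiteDimensional_supportedOn (hE : ¬ FiniteDimensional ℂ E)
    (Φ : H ≃ₗᵢ[ℂ] lp (fun _ : ι => E) 2) {S : Set ι} (hS : S.Nonempty) :
    ¬ FiniteDimensional ℂ (supportedOn Φ S) := by
  classical
  obtain ⟨i, hi⟩ := hS
  intro hfin
  let f : E →ₗ[ℂ] supportedOn Φ S :=
    LinearMap.codRestrict _
      (Φ.symm.toLinearEquiv.toLinearMap ∘ₗ lp.lsingle (E := fun _ : ι => E) 2 i) (by
      intro y j hj
      have : j ≠ i := by rintro rfl; exact hj hi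
      simp [this])
  refine hE (FiniteDimensional.of_injective f ?_)
  intro y z hyz
  have h := congrArg (fun v : supportedOn Φ S => Φ v i) hyz
  simpa [f] using h

end Supported

section Syndetic

theorem inv_mem_pow_of_inv_eq {G : Type*} [Group G] {W : Set G} (hsym : W⁻¹ = W) {w : G} {k : ℕ}
    (hw : w ∈ W ^ k) : w⁻¹ ∈ W ^ k := by
  rw [← hsym, inv_pow, Set.inv_mem_inv]
  exact hw

instance uncountable_nat_arrow_bool : Uncountable (ℕ → Bool) := by
  rw [← Cardinal.aleph0_lt_mk_iff]
  simp [Cardinal.aleph0_lt_continuum]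

theorem exists_ne_inv_mul_mem {G T : Type*} [Group G] [Uncountable T] {W : Set G}
    (hsynd : ∃ s : ℕ → G, ∀ g, ∃ n, g ∈ s n • W) (g : T → G) :
    ∃ a b, a ≠ b ∧ (g a)⁻¹ * g b ∈ W⁻¹ * W := by
  obtain ⟨s, hs⟩ := hsynd
  choose N hN using fun t => hs (g t)
  have : ¬ Function.Injective N := fun h => not_countable (h.countable)
  simp only [Function.Injective, not_forall] at this
  obtain ⟨a, b, hab, hne⟩ := this
  refine ⟨a, b, hne, ?_⟩
  obtain ⟨w, hw, hwa⟩ := hN a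
  obtain ⟨w', hw', hwb⟩ := hN b
  refine ⟨w⁻¹, Set.inv_mem_inv.mpr hw, w', hw', ?_⟩
  simp only [smul_eq_mul] at hwa hwb
  simp [← hwa, ← hwb, hab]

variable {E H : Type*} [NormedAddCommGroup E] [InnerProductSpace ℂ E]
  [NormedAddCommGroup H] [InnerProductSpace ℂ H]

theorem exists_block_diagonal_eqOn {Y : Type*} (Φ : H ≃ₗᵢ[ℂ] lp (fun _ : ℕ × Y => E) 2)
    {W : Set (H ≃ₗᵢ[ℂ] H)} (hsynd : ∃ s : ℕ → (H ≃ₗᵢ[ℂ] H), ∀ g, ∃ n, g ∈ s n • W) :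
    ∃ n : ℕ, ∀ d : ℕ × Y → (E ≃ₗᵢ[ℂ] E), ∃ w ∈ W⁻¹ * W,
      ∀ x ∈ supportedOn Φ {i | i.1 = n}, w x = monomialOp Φ 1 d x := by
  obtain ⟨s, hs⟩ := hsynd
  have key : ∃ n : ℕ, ∀ d : ℕ × Y → (E ≃ₗᵢ[ℂ] E), ∃ w ∈ W,
      ∀ x ∈ supportedOn Φ {i | i.1 = n}, (s n * w) x = monomialOp Φ 1 d x := by
    by_contra! h
    choose d hd using h
    obtain ⟨n, w, hw, hwn⟩ := hs (monomialOp Φ 1 fun i => d i.1 i)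
    obtain ⟨x, hx, hne⟩ := hd n w hw
    refine hne ?_
    rw [show s n * w = _ from hwn]
    refine coord_ext Φ fun i => ?_
    rw [monomialOp_one_coord, monomialOp_one_coord]
    by_cases hi : i.1 = n
    · rw [hi]
    · simp [hx i hi]
  obtain ⟨n, hn⟩ := key
  refine ⟨n, fun d => ?_⟩
  obtain ⟨w, hw, hwd⟩ := hn d
  obtain ⟨v, hv, hv1⟩ := hn 1
  refine ⟨v⁻¹ * w, ⟨v⁻¹, Set.inv_mem_inv.mpr hv, w, hw, rfl⟩, fun x hx => ?_⟩
  have hdx : monomialOp Φ 1 d x ∈ supportedOn Φ {i | i.1 = n} := fun i hi => by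
    rw [monomialOp_one_coord, hx i hi, map_zero]
  have h1 := hv1 _ hdx
  rw [monomialOp_one] at h1
  have h2 : v⁻¹ * w = (s n * v)⁻¹ * (s n * w) := by group
  rw [h2, LinearIsometryEquiv.coe_mul, Function.comp_apply, hwd x hx]
  exact (LinearIsometryEquiv.symm_apply_eq _).mpr h1.symm

end Syndetic

section Stabilizer

variable {H : Type*} [NormedAddCommGroup H] [InnerProductSpace ℂ H]

theorem inv_mem_pointwiseStabilizer {B : Submodule ℂ H} {u : H ≃ₗᵢ[ℂ] H}
    (hu : u ∈ pointwiseStabilizer B) : u⁻¹ ∈ pointwiseStabilizer B := fun x hx =>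
  (LinearIsometryEquiv.symm_apply_eq u).mpr (hu x hx).symm

theorem apply_mem_orthogonal_of_mem_pointwiseStabilizer {B : Submodule ℂ H} {u : H ≃ₗᵢ[ℂ] H}
    (hu : u ∈ pointwiseStabilizer B) {x : H} (hx : x ∈ Bᗮ) : u x ∈ Bᗮ := by
  rw [Submodule.mem_orthogonal] at hx ⊢
  intro y hy
  rw [← hu y hy, u.inner_map_map]
  exact hx y hy

theorem commute_of_mem_pointwiseStabilizer {B : Submodule ℂ H} [B.HasOrthogonalProjection]
    {a b : H ≃ₗᵢ[ℂ] H} (ha : a ∈ pointwiseStabilizer B) (hb : b ∈ pointwiseStabilizer Bᗮ) :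
    a * b = b * a := by
  ext x
  obtain ⟨y, hy, z, hz, rfl⟩ := B.exists_add_mem_mem_orthogonal x
  have hby : b y ∈ B := by
    have := apply_mem_orthogonal_of_mem_pointwiseStabilizer hb (x := y)
    rw [Submodule.orthogonal_orthogonal] at this
    exact this hy
  have haz := apply_mem_orthogonal_of_mem_pointwiseStabilizer ha hz
  simp only [LinearIsometryEquiv.coe_mul, Function.comp_apply, map_add, ha y hy, hb z hz,
    ha _ hby, hb _ haz]

end Stabilizer

section Block

/-- The permutation of `ℕ × ℕ × ℤ` translating the line over `(n, i)` by `τ n i`. -/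
def translationPerm (τ : ℕ → ℕ → ℤ) : Equiv.Perm (ℕ × ℕ × ℤ) where
  toFun p := (p.1, p.2.1, p.2.2 + τ p.1 p.2.1)
  invFun p := (p.1, p.2.1, p.2.2 - τ p.1 p.2.1)
  left_inv p := by simp
  right_inv p := by simp

theorem translationPerm_inv_mul (σ τ : ℕ → ℕ → ℤ) :
    (translationPerm σ)⁻¹ * translationPerm τ = translationPerm (τ - σ) := by
  ext p
  · rfl
  · rfl
  · exact add_sub_assoc _ _ _

variable {E H : Type*} [NormedAddCommGroup E] [InnerProductSpace ℂ E]
  [NormedAddCommGroup H] [InnerProductSpace ℂ H]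

theorem exists_eq_monomialOp_mulSingle {ι : Type*} [DecidableEq ι]
    (Φ : H ≃ₗᵢ[ℂ] lp (fun _ : ι => E) 2) (i : ι) {u : H ≃ₗᵢ[ℂ] H}
    (hu : u ∈ pointwiseStabilizer (supportedOn Φ {i}ᶜ)) :
    ∃ v : E ≃ₗᵢ[ℂ] E, u = monomialOp Φ 1 (Pi.mulSingle i v) := by
  have hsupp : ∀ y : E, Φ.symm (lp.single 2 i y) ∈ supportedOn Φ {i} := fun y j hj => by
    have : j ≠ i := hj
    simp [this]
  have horth : (supportedOn Φ {i}ᶜ)ᗮ = supportedOn Φ {i} := by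
    rw [orthogonal_supportedOn, compl_compl]
  have hback : ∀ x ∈ supportedOn Φ {i}, Φ.symm (lp.single 2 i (Φ x i)) = x := fun x hx =>
    coord_ext Φ fun j => by
      by_cases hj : j = i
      · subst hj; simp
      · simp [hj, hx j hj]
  have hpres : ∀ {w : H ≃ₗᵢ[ℂ] H}, w ∈ pointwiseStabilizer (supportedOn Φ {i}ᶜ) →
      ∀ y, Φ.symm (lp.single 2 i (Φ (w (Φ.symm (lp.single 2 i y))) i)) =
        w (Φ.symm (lp.single 2 i y)) := fun {w} hw y => by
    refine hback _ ?_
    have := apply_mem_orthogonal_of_mem_pointwiseStabilizer hw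
      (x := Φ.symm (lp.single 2 i y))
    rw [horth] at this
    exact this (hsupp y)
  have huinv := inv_mem_pointwiseStabilizer hu
  let v : E ≃ₗᵢ[ℂ] E :=
    { toFun := fun y => Φ (u (Φ.symm (lp.single 2 i y))) i
      invFun := fun y => Φ (u⁻¹ (Φ.symm (lp.single 2 i y))) i
      map_add' := fun x y => by simp [lp.single_add]
      map_smul' := fun c x => by simp [lp.single_smul]
      left_inv := fun y => by
        change Φ (u⁻¹ (Φ.symm (lp.single 2 i (Φ (u (Φ.symm (lp.single 2 i y))) i)))) i = y
        rw [hpres hu]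
        simp [LinearIsometryEquiv.inv_def]
      right_inv := fun y => by
        change Φ (u (Φ.symm (lp.single 2 i (Φ (u⁻¹ (Φ.symm (lp.single 2 i y))) i)))) i = y
        rw [hpres huinv]
        simp [LinearIsometryEquiv.inv_def]
      norm_map' := fun y => by
        have h1 : ‖Φ.symm (lp.single 2 i (Φ (u (Φ.symm (lp.single 2 i y))) i))‖ = ‖y‖ := by
          rw [hpres hu]
          simp [lp.norm_single]
        simpa [lp.norm_single] using h1 }
  refine ⟨v, ?_⟩
  ext x
  obtain ⟨y, hy, z, hz, rfl⟩ : ∃ y ∈ supportedOn Φ {i}ᶜ, ∃ z ∈ supportedOn Φ {i}, x = y + z := by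
    refine ⟨x - Φ.symm (lp.single 2 i (Φ x i)), fun j hj => ?_, _, hsupp (Φ x i), by simp⟩
    have : j = i := by simpa using hj
    subst this
    simp
  rw [map_add, map_add, hu y hy]
  congr 1
  · refine coord_ext Φ fun j => ?_
    rw [monomialOp_one_coord]
    by_cases hj : j = i
    · subst hj
      simp [hy j (by simp)]
    · simp [hj]
  · refine coord_ext Φ fun j => ?_
    rw [monomialOp_one_coord, ← hback z hz, ← hpres hu]
    by_cases hj : j = i
    · subst hj
      simp [v]
    · simp [hj]

theorem exists_block_stabilizer_subset_pow [CompleteSpace H]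
    (Φ : H ≃ₗᵢ[ℂ] lp (fun _ : ℕ × ℕ × ℤ => E) 2)
    {W : Set (H ≃ₗᵢ[ℂ] H)} (hsym : W⁻¹ = W)
    (hsynd : ∃ s : ℕ → (H ≃ₗᵢ[ℂ] H), ∀ g, ∃ n, g ∈ s n • W) :
    ∃ i, pointwiseStabilizer (supportedOn Φ {i}ᶜ) ⊆ W ^ 8 := by
  obtain ⟨n, hn⟩ := exists_block_diagonal_eqOn Φ hsynd
  have hWW : W⁻¹ * W = W ^ 2 := by rw [hsym, sq]
  rw [hWW] at hn
  let g : (ℕ → Bool) → (H ≃ₗᵢ[ℂ] H) := fun t =>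
    monomialOp Φ (translationPerm (Pi.single n fun i => if t i then 1 else 0)) 1
  have hg : ∃ τ : ℕ → ℕ → ℤ, (∀ m ≠ n, τ m = 0) ∧ (∃ i, τ n i = 1) ∧
      monomialOp Φ (translationPerm τ) 1 ∈ W ^ 2 := by
    have hdiff : ∀ a b, (g a)⁻¹ * g b ∈ W ^ 2 → (∃ i, a i = false ∧ b i = true) →
        ∃ τ : ℕ → ℕ → ℤ, (∀ m ≠ n, τ m = 0) ∧ (∃ i, τ n i = 1) ∧
          monomialOp Φ (translationPerm τ) 1 ∈ W ^ 2 := by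
      rintro a b hab ⟨i, hai, hbi⟩
      refine ⟨Pi.single n (fun i => if b i then 1 else 0) -
        Pi.single n (fun i => if a i then 1 else 0),
        fun m hm => by simp [hm], ⟨i, by simp [hai, hbi]⟩, ?_⟩
      convert hab using 1
      simp only [g]
      rw [monomialOp_inv, monomialOp_mul, translationPerm_inv_mul]
      congr 1
    obtain ⟨a, b, hne, hab⟩ := exists_ne_inv_mul_mem hsynd g
    rw [hWW] at hab
    obtain ⟨i, hi⟩ := Function.ne_iff.mp hne
    cases hai : a i
    · exact hdiff a b hab ⟨i, hai, by simpa [hai] using hi.symm⟩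
    · refine hdiff b a ?_ ⟨i, by simpa [hai] using hi.symm, hai⟩
      simpa using inv_mem_pow_of_inv_eq hsym hab
  obtain ⟨τ, hτ0, ⟨i, hτi⟩, hs⟩ := hg
  refine ⟨(n, i, 0), fun u hu => ?_⟩
  obtain ⟨v, rfl⟩ := exists_eq_monomialOp_mulSingle Φ _ hu
  let d : ℕ × ℕ × ℤ → (E ≃ₗᵢ[ℂ] E) := fun p => if p.1 = n ∧ p.2.1 = i ∧ 0 ≤ p.2.2 then v else 1
  obtain ⟨w, hw, hwd⟩ := hn d
  set s := monomialOp Φ (translationPerm τ) 1 with hs_def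
  set D := monomialOp Φ 1 d with hD
  set B := supportedOn Φ {p | p.1 = n} with hB
  have : CompleteSpace B := (isClosed_supportedOn Φ _).completeSpace_coe
  have hcomm := commute_of_mem_pointwiseStabilizer (B := B) (a := D⁻¹ * w) (b := s)
    (fun x hx => by
      rw [LinearIsometryEquiv.coe_mul, Function.comp_apply, hwd x hx]
      exact D.symm_apply_apply x)
    (fun x hx => by
      rw [orthogonal_supportedOn] at hx
      refine coord_ext Φ fun p => ?_
      rw [hs_def, monomialOp_coord]
      by_cases hp : p.1 = n
      · rw [hx p (by simpa using hp), hx _ (by simpa [translationPerm] using hp)]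
        simp
      · simp [translationPerm, hτ0 _ hp])
  have heq : monomialOp Φ 1 (Pi.mulSingle (n, i, 0) v) = w * s * w⁻¹ * s⁻¹ := by
    have h1 : w * s * w⁻¹ = D * s * D⁻¹ := by
      have : w = D * (D⁻¹ * w) := by group
      calc w * s * w⁻¹ = D * ((D⁻¹ * w) * s) * w⁻¹ := by group
        _ = D * s * D⁻¹ := by rw [hcomm]; group
    rw [h1, hs_def, hD, monomialOp_inv, monomialOp_inv, monomialOp_mul, monomialOp_mul,
      monomialOp_mul]
    congr 1
    · simp
    · funext ⟨m, j, k⟩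
      by_cases hm : m = n
      · by_cases hj : j = i
        · subst hm hj
          rcases lt_trichotomy k 0 with hk | rfl | hk
          · have h0 : ¬ 0 ≤ k := by lia
            have h1 : ¬ 1 ≤ k := by lia
            simp [d, translationPerm, hτi, hk.ne, h0, h1]
          · simp [d, translationPerm, hτi]
          · have h1 : 1 ≤ k := hk
            simp [d, translationPerm, hτi, hk.ne', hk.le, h1]
        · simp [d, translationPerm, hj]
      · simp [d, translationPerm, hm]
  rw [heq, show 8 = 2 + 2 + 2 + 2 from rfl, pow_add, pow_add, pow_add]
  exact Set.mul_mem_mul (Set.mul_mem_mul (Set.mul_mem_mul hw hs) (inv_mem_pow_of_inv_eq hsym hw))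
    (inv_mem_pow_of_inv_eq hsym hs)

end Block

section Glue

variable {H : Type*} [NormedAddCommGroup H] [InnerProductSpace ℂ H]

theorem LinearIsometryEquiv.exists_extend_orthogonal {K L : Submodule ℂ H}
    [K.HasOrthogonalProjection] [L.HasOrthogonalProjection] (a : K ≃ₗᵢ[ℂ] L)
    (a' : Kᗮ ≃ₗᵢ[ℂ] Lᗮ) :
    ∃ g : H ≃ₗᵢ[ℂ] H, (∀ x : K, g x = a x) ∧ ∀ x : Kᗮ, g x = a' x := by
  refine ⟨K.orthogonalDecomposition.trans
    ((LinearIsometryEquiv.withLpProdCongr 2 a a').trans L.orthogonalDecomposition.symm),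
    fun x => ?_, fun x => ?_⟩
  · rw [LinearIsometryEquiv.trans_apply, LinearIsometryEquiv.trans_apply,
      LinearIsometryEquiv.symm_apply_eq]
    rw [Submodule.orthogonalDecomposition_apply, Submodule.orthogonalDecomposition_apply]
    simp [Submodule.orthogonalProjectionOnto_orthogonal_apply_eq_zero x.2,
      Submodule.orthogonalProjectionOnto_orthogonal_apply_eq_zero (a x).2]
  · rw [LinearIsometryEquiv.trans_apply, LinearIsometryEquiv.trans_apply,
      LinearIsometryEquiv.symm_apply_eq]
    rw [Submodule.orthogonalDecomposition_apply, Submodule.orthogonalDecomposition_apply]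
    simp [Submodule.orthogonalProjectionOnto_apply_of_mem_orthogonal x.2,
      Submodule.orthogonalProjectionOnto_apply_of_mem_orthogonal (a' x).2]

end Glue

section AlmostDisjoint

/-- The branch of the binary tree determined by `t`. -/
def binaryBranch (t : ℕ → Bool) : Set (List Bool) :=
  Set.range fun n => (List.range n).map t

theorem infinite_binaryBranch (t : ℕ → Bool) : (binaryBranch t).Infinite :=
  Set.infinite_range_of_injective fun m n h => by simpa using congrArg List.length h

theorem finite_binaryBranch_inter {s t : ℕ → Bool} (h : s ≠ t) :
    (binaryBranch s ∩ binaryBranch t).Finite := by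
  obtain ⟨i, hi⟩ := Function.ne_iff.mp h
  refine ((Set.finite_Iic i).image fun n => (List.range n).map s).subset ?_
  rintro _ ⟨⟨m, rfl⟩, n, hn⟩
  refine ⟨m, ?_, rfl⟩
  simp only at hn
  have hmn : n = m := by simpa using congrArg List.length hn
  subst hmn
  by_contra hlt
  exact hi (List.map_inj_left.mp hn i (by simpa using hlt)).symm

theorem infinite_compl_binaryBranch (t : ℕ → Bool) : (binaryBranch t)ᶜ.Infinite := by
  have hne : (fun n => !t n) ≠ t := Function.ne_iff.mpr ⟨0, by simp⟩
  refine ((infinite_binaryBranch fun n => !t n).sdiff (finite_binaryBranch_inter hne)).mono ?_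
  rintro x ⟨hx, hx'⟩ hxt
  exact hx' ⟨hx, hxt⟩

variable {ι H : Type*} [NormedAddCommGroup H] [InnerProductSpace ℂ H]

theorem finiteDimensional_supportedOn_repr (b : HilbertBasis ι ℂ H) {S : Set ι} (hS : S.Finite) :
    FiniteDimensional ℂ (supportedOn b.repr S) := by
  have := hS.to_subtype
  let f : supportedOn b.repr S →ₗ[ℂ] (S → ℂ) :=
    { toFun := fun x i => b.repr x i
      map_add' := fun x y => by ext; simp
      map_smul' := fun c x => by ext; simp }
  refine FiniteDimensional.of_injective f fun x y hxy => Subtype.ext ?_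
  refine coord_ext b.repr fun i => ?_
  by_cases hi : i ∈ S
  · exact congrFun hxy ⟨i, hi⟩
  · rw [x.2 i hi, y.2 i hi]

theorem not_finiteDimensional_supportedOn_repr (b : HilbertBasis ι ℂ H) {S : Set ι}
    (hS : S.Infinite) : ¬ FiniteDimensional ℂ (supportedOn b.repr S) := by
  intro hfin
  have := hS.to_subtype
  let v : S → supportedOn b.repr S := fun i => ⟨b i, fun j hj => by
    have : j ≠ i := by rintro rfl; exact hj i.2
    classical
    rw [b.repr_self, lp.single_apply_ne _ _ _ this]⟩
  have hv : LinearIndependent ℂ v := by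
    refine LinearIndependent.of_comp (supportedOn b.repr S).subtype ?_
    exact b.orthonormal.linearIndependent.comp _ Subtype.val_injective
  have := hv.finite
  exact not_finite S

theorem exists_pow_two_inv_apply_mem_orthogonal [CompleteSpace H]
    [TopologicalSpace.SeparableSpace H]
    {W : Set (H ≃ₗᵢ[ℂ] H)} (hsym : W⁻¹ = W)
    (hsynd : ∃ s : ℕ → (H ≃ₗᵢ[ℂ] H), ∀ g, ∃ n, g ∈ s n • W)
    {K : Submodule ℂ H} (hK : IsClosed (K : Set H)) (hKinf : ¬ FiniteDimensional ℂ K)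
    (hKinf' : ¬ FiniteDimensional ℂ Kᗮ) :
    ∃ h ∈ W ^ 2, ∃ F ≤ K, FiniteDimensional ℂ F ∧ ∀ x ∈ K, x ∈ Fᗮ → h⁻¹ x ∈ Kᗮ := by
  have hinf : ¬ FiniteDimensional ℂ H := fun _ => hKinf inferInstance
  have : CompleteSpace K := hK.completeSpace_coe
  obtain ⟨b⟩ := HilbertBasis.exists_of_infinite hinf (List Bool)
  let L : (ℕ → Bool) → Submodule ℂ H := fun t => supportedOn b.repr (binaryBranch t)
  have hL : ∀ t, CompleteSpace (L t) := fun t => (isClosed_supportedOn _ _).completeSpace_coe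
  have hg : ∀ t, ∃ g : H ≃ₗᵢ[ℂ] H, (∀ x ∈ K, g x ∈ L t) ∧ (∀ x ∈ L t, g⁻¹ x ∈ K) ∧
      ∀ x ∈ (L t)ᗮ, g⁻¹ x ∈ Kᗮ := fun t => by
    obtain ⟨a⟩ := LinearIsometryEquiv.nonempty_of_infinite hKinf
      (not_finiteDimensional_supportedOn_repr b (infinite_binaryBranch t))
    have horth : ¬ FiniteDimensional ℂ (L t)ᗮ := by
      rw [orthogonal_supportedOn]
      exact not_finiteDimensional_supportedOn_repr b (infinite_compl_binaryBranch t)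
    obtain ⟨a'⟩ := LinearIsometryEquiv.nonempty_of_infinite hKinf' horth
    obtain ⟨g, hg, hg'⟩ := LinearIsometryEquiv.exists_extend_orthogonal (L := L t) a a'
    refine ⟨g, fun x hx => ?_, fun x hx => ?_, fun x hx => ?_⟩
    · rw [hg ⟨x, hx⟩]
      exact (a ⟨x, hx⟩).2
    · have : g⁻¹ x = a.symm ⟨x, hx⟩ := (LinearIsometryEquiv.symm_apply_eq g).mpr (by
        rw [hg, a.apply_symm_apply])
      rw [this]
      exact (a.symm ⟨x, hx⟩).2
    · have : g⁻¹ x = a'.symm ⟨x, hx⟩ := (LinearIsometryEquiv.symm_apply_eq g).mpr (by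
        rw [hg', a'.apply_symm_apply])
      rw [this]
      exact (a'.symm ⟨x, hx⟩).2
  choose g hgK hgL hgL' using hg
  obtain ⟨s, t, hst, hmem⟩ := exists_ne_inv_mul_mem hsynd g
  rw [hsym, ← sq] at hmem
  set S := binaryBranch s ∩ binaryBranch t with hS
  have hfin : FiniteDimensional ℂ (supportedOn b.repr S) :=
    finiteDimensional_supportedOn_repr b (finite_binaryBranch_inter hst)
  refine ⟨_, hmem, (supportedOn b.repr S).map ((g s)⁻¹.toLinearEquiv : H →ₗ[ℂ] H),
    ?_, inferInstance, fun x hx hxF => ?_⟩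
  · rintro _ ⟨y, hy, rfl⟩
    exact hgL s y fun i hi => hy i fun h => hi h.1
  · have h1 : g s x ∈ (supportedOn b.repr S)ᗮ := by
      rw [Submodule.mem_orthogonal] at hxF ⊢
      intro y hy
      have := hxF _ ⟨y, hy, rfl⟩
      rw [← (g s).inner_map_map] at this
      simpa [LinearIsometryEquiv.inv_def] using this
    have h2 : g s x ∈ (L t)ᗮ := by
      rw [orthogonal_supportedOn] at h1 ⊢
      intro i hi
      have hit : i ∈ binaryBranch t := by simpa using hi
      by_cases his : i ∈ binaryBranch s
      · exact h1 i fun h => h ⟨his, hit⟩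
      · exact hgK s x hx i his
    have h3 := hgL' t _ h2
    rwa [mul_inv_rev, inv_inv]

end AlmostDisjoint

section Rotation

variable {F H : Type*} [NormedAddCommGroup F] [InnerProductSpace ℂ F] [CompleteSpace F]
  [NormedAddCommGroup H] [InnerProductSpace ℂ H] [CompleteSpace H]

open ContinuousLinearMap in
/-- The rotation by the angle `θ` of the sum of the ranges of `i` and `e`, extended by the identity
on the orthogonal complement when these ranges are orthogonal. -/
noncomputable def rotationMap (i e : F →ₗᵢ[ℂ] H) (θ : ℝ) : H →ₗ[ℂ] H :=
  LinearMap.id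
    + i.toLinearMap ∘ₗ ((Real.cos θ - 1 : ℂ) • (adjoint i.toContinuousLinearMap).toLinearMap
      - (Real.sin θ : ℂ) • (adjoint e.toContinuousLinearMap).toLinearMap)
    + e.toLinearMap ∘ₗ ((Real.sin θ : ℂ) • (adjoint i.toContinuousLinearMap).toLinearMap
      + (Real.cos θ - 1 : ℂ) • (adjoint e.toContinuousLinearMap).toLinearMap)

theorem LinearIsometry.adjoint_apply_apply (i : F →ₗᵢ[ℂ] H) (x : F) :
    ContinuousLinearMap.adjoint i.toContinuousLinearMap (i x) = x := by
  refine ext_inner_left ℂ fun v => ?_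
  rw [ContinuousLinearMap.adjoint_inner_right]
  exact i.inner_map_map v x

theorem LinearIsometry.adjoint_apply_eq_zero {i : F →ₗᵢ[ℂ] H} {y : H}
    (hy : ∀ x, inner ℂ (i x) y = 0) :
    ContinuousLinearMap.adjoint i.toContinuousLinearMap y = 0 := by
  refine ext_inner_left ℂ fun v => ?_
  rw [ContinuousLinearMap.adjoint_inner_right, inner_zero_right]
  exact hy v

variable {i e : F →ₗᵢ[ℂ] H} (hie : ∀ x y, inner ℂ (i x) (e y) = 0)
include hie

theorem exists_eq_add_orthogonal (v : H) : ∃ x y z, v = i x + e y + z ∧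
    (∀ x, inner ℂ (i x) z = 0) ∧ ∀ y, inner ℂ (e y) z = 0 := by
  have hei : ∀ x y, inner ℂ (e x) (i y) = 0 := fun x y => inner_eq_zero_symm.mp (hie y x)
  refine ⟨ContinuousLinearMap.adjoint i.toContinuousLinearMap v,
    ContinuousLinearMap.adjoint e.toContinuousLinearMap v,
    v - (i (ContinuousLinearMap.adjoint i.toContinuousLinearMap v) +
      e (ContinuousLinearMap.adjoint e.toContinuousLinearMap v)), by abel, fun x => ?_, fun x => ?_⟩
  · rw [inner_sub_right, inner_add_right, i.inner_map_map, hie,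
      ContinuousLinearMap.adjoint_inner_right]
    simp
  · rw [inner_sub_right, inner_add_right, e.inner_map_map, hei,
      ContinuousLinearMap.adjoint_inner_right]
    simp

theorem rotationMap_apply (θ : ℝ) (x y : F) {z : H} (hz : ∀ x, inner ℂ (i x) z = 0)
    (hz' : ∀ y, inner ℂ (e y) z = 0) :
    rotationMap i e θ (i x + e y + z) =
      i ((Real.cos θ : ℂ) • x - (Real.sin θ : ℂ) • y) +
        e ((Real.sin θ : ℂ) • x + (Real.cos θ : ℂ) • y) + z := by
  have hei : ∀ x y, inner ℂ (e x) (i y) = 0 := fun x y => inner_eq_zero_symm.mp (hie y x)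
  simp only [rotationMap, LinearMap.add_apply, LinearMap.comp_apply, LinearMap.id_apply,
    LinearMap.sub_apply, LinearMap.smul_apply, ContinuousLinearMap.coe_coe, map_add,
    LinearIsometry.adjoint_apply_apply, LinearIsometry.adjoint_apply_eq_zero hz,
    LinearIsometry.adjoint_apply_eq_zero hz', LinearIsometry.adjoint_apply_eq_zero (hie · y),
    LinearIsometry.adjoint_apply_eq_zero (hei · x), LinearIsometry.coe_toLinearMap]
  simp only [map_sub, map_smul, map_zero, smul_zero, add_zero, zero_add]
  module

omit [CompleteSpace F] [CompleteSpace H] in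
theorem norm_sq_add_add_of_orthogonal (x y : F) {z : H} (hz : ∀ x, inner ℂ (i x) z = 0)
    (hz' : ∀ y, inner ℂ (e y) z = 0) :
    ‖i x + e y + z‖ ^ 2 = ‖x‖ ^ 2 + ‖y‖ ^ 2 + ‖z‖ ^ 2 := by
  rw [@norm_add_sq ℂ, @norm_add_sq ℂ, hie, inner_add_left, hz, hz']
  simp

theorem norm_rotationMap (θ : ℝ) (v : H) : ‖rotationMap i e θ v‖ = ‖v‖ := by
  obtain ⟨x, y, z, rfl, hz, hz'⟩ := exists_eq_add_orthogonal hie v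
  rw [rotationMap_apply hie θ x y hz hz', ← sq_eq_sq₀ (norm_nonneg _) (norm_nonneg _),
    norm_sq_add_add_of_orthogonal hie _ _ hz hz', norm_sq_add_add_of_orthogonal hie _ _ hz hz',
    @norm_sub_sq ℂ, @norm_add_sq ℂ]
  simp only [norm_smul, inner_smul_left, inner_smul_right, Complex.conj_ofReal, Complex.norm_real,
    mul_pow, Real.norm_eq_abs, sq_abs]
  have h : RCLike.re ((Real.sin θ : ℂ) * ((Real.cos θ : ℂ) * inner ℂ x y)) =
      RCLike.re ((Real.cos θ : ℂ) * ((Real.sin θ : ℂ) * inner ℂ x y)) := by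
    congr 1; ring
  rw [h]
  linear_combination (‖x‖ ^ 2 + ‖y‖ ^ 2) * Real.sin_sq_add_cos_sq θ

theorem rotationMap_rotationMap (θ φ : ℝ) (v : H) :
    rotationMap i e θ (rotationMap i e φ v) = rotationMap i e (θ + φ) v := by
  obtain ⟨x, y, z, rfl, hz, hz'⟩ := exists_eq_add_orthogonal hie v
  rw [rotationMap_apply hie φ x y hz hz', rotationMap_apply hie θ _ _ hz hz',
    rotationMap_apply hie (θ + φ) x y hz hz', Real.cos_add, Real.sin_add]
  congr 3 <;> push_cast <;> module

theorem rotationMap_zero (v : H) : rotationMap i e 0 v = v := by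
  obtain ⟨x, y, z, rfl, hz, hz'⟩ := exists_eq_add_orthogonal hie v
  rw [rotationMap_apply hie 0 x y hz hz']
  simp

/-- The rotation by the angle `θ` in the sum of the orthogonal ranges of `i` and `e`. -/
noncomputable def planeRotation (θ : ℝ) : H ≃ₗᵢ[ℂ] H where
  toLinearEquiv := LinearEquiv.ofLinearMap (rotationMap i e θ) (rotationMap i e (-θ))
    (LinearMap.ext fun v => by simp [rotationMap_rotationMap hie, rotationMap_zero hie])
    (LinearMap.ext fun v => by simp [rotationMap_rotationMap hie, rotationMap_zero hie])
  norm_map' := norm_rotationMap hie θ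

theorem planeRotation_apply (θ : ℝ) (x y : F) {z : H} (hz : ∀ x, inner ℂ (i x) z = 0)
    (hz' : ∀ y, inner ℂ (e y) z = 0) :
    planeRotation hie θ (i x + e y + z) =
      i ((Real.cos θ : ℂ) • x - (Real.sin θ : ℂ) • y) +
        e ((Real.sin θ : ℂ) • x + (Real.cos θ : ℂ) • y) + z :=
  rotationMap_apply hie θ x y hz hz'

theorem planeRotation_inv_mul (θ φ : ℝ) :
    (planeRotation hie θ)⁻¹ * planeRotation hie φ = planeRotation hie (φ - θ) := by
  rw [inv_mul_eq_iff_eq_mul]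
  ext v
  refine ((rotationMap_rotationMap hie θ (φ - θ) v).trans ?_).symm
  rw [add_sub_cancel]
  rfl

omit hie in
theorem exists_planeRotation_conj_mem_pow_two {W : Set (H ≃ₗᵢ[ℂ] H)} (hsym : W⁻¹ = W)
    (hsynd : ∃ s : ℕ → (H ≃ₗᵢ[ℂ] H), ∀ g, ∃ n, g ∈ s n • W)
    (hie : ∀ x y, inner ℂ (i x) (e y) = 0) (h : H ≃ₗᵢ[ℂ] H) :
    ∃ θ ∈ Set.Ioo (0 : ℝ) 1, h⁻¹ * planeRotation hie θ * h ∈ W ^ 2 := by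
  have : Uncountable (Set.Ioo (0 : ℝ) 1) := by
    rw [← Cardinal.aleph0_lt_mk_iff, Cardinal.mk_Ioo_real one_pos]
    exact Cardinal.aleph0_lt_continuum
  obtain ⟨a, b, hne, hab⟩ := exists_ne_inv_mul_mem hsynd
    fun θ : Set.Ioo (0 : ℝ) 1 => h⁻¹ * planeRotation hie θ * h
  have hrw : ∀ a b : ℝ, (h⁻¹ * planeRotation hie a * h)⁻¹ * (h⁻¹ * planeRotation hie b * h) =
      h⁻¹ * planeRotation hie (b - a) * h := fun a b => by
    rw [← planeRotation_inv_mul]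
    group
  rw [hsym, ← sq] at hab
  obtain ⟨ha0, ha1⟩ := a.2
  obtain ⟨hb0, hb1⟩ := b.2
  rcases lt_or_gt_of_ne (Subtype.coe_ne_coe.mpr hne) with hlt | hlt
  · refine ⟨b - a, ⟨by linarith, by linarith⟩, ?_⟩
    rwa [← hrw]
  · refine ⟨a - b, ⟨by linarith, by linarith⟩, ?_⟩
    rw [← hrw]
    simpa [mul_assoc] using inv_mem_pow_of_inv_eq hsym hab

end Rotation

section Extension

variable {F H : Type*} [NormedAddCommGroup F] [InnerProductSpace ℂ F] [FiniteDimensional ℂ F]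
  [NormedAddCommGroup H] [InnerProductSpace ℂ H]

theorem exists_mem_pointwiseStabilizer_apply_eq {M : Submodule ℂ H} {m m' : F →ₗ[ℂ] H}
    (hm : ∀ x, m x ∈ M) (hm' : ∀ x, m' x ∈ M) (hnorm : ∀ x, ‖m x‖ = ‖m' x‖) :
    ∃ g ∈ pointwiseStabilizer Mᗮ, ∀ x, g (m x) = m' x := by
  let V := LinearMap.range m ⊔ LinearMap.range m'
  have hVM : V ≤ M := sup_le (by rintro _ ⟨x, rfl⟩; exact hm x) (by rintro _ ⟨x, rfl⟩; exact hm' x)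
  let k : F →ₗ[ℂ] V := m.codRestrict V fun x => le_sup_left (a := LinearMap.range m) ⟨x, rfl⟩
  let k' : F →ₗ[ℂ] V := m'.codRestrict V fun x => le_sup_right (a := LinearMap.range m) ⟨x, rfl⟩
  have hk : ∀ x, ‖k' x‖ = ‖k x‖ := fun x => (hnorm x).symm
  obtain ⟨r, hr⟩ := k.rangeRestrict.exists_rightInverse_of_surjective k.range_rangeRestrict
  have hr' : ∀ y, k (r y) = y := fun y => congrArg Subtype.val (LinearMap.congr_fun hr y)
  let L : LinearMap.range k →ₗᵢ[ℂ] V := ⟨k' ∘ₗ r, fun y => by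
    rw [LinearMap.comp_apply, hk, hr']
    rfl⟩
  have hL : ∀ x, L.extend (k x) = k' x := fun x => by
    refine (L.extend_apply ⟨k x, x, rfl⟩).trans ?_
    rw [← sub_eq_zero, ← norm_eq_zero]
    change ‖k' (r ⟨k x, x, rfl⟩) - k' x‖ = 0
    rw [← map_sub, hk, map_sub, hr', sub_self, norm_zero]
  obtain ⟨g, hg, hg'⟩ := LinearIsometryEquiv.exists_extend_orthogonal
    (L.extend.toLinearIsometryEquiv rfl) (LinearIsometryEquiv.refl ℂ Vᗮ)
  refine ⟨g, fun x hx => hg' ⟨x, Submodule.orthogonal_le hVM hx⟩, fun x => ?_⟩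
  exact (hg (k x)).trans (congrArg Subtype.val (hL x))

theorem exists_norm_sq_eq_sub_s13 {Z : F →ₗ[ℂ] F} {r : ℝ} (hZ : ∀ x, ‖Z x‖ ≤ r * ‖x‖) :
    ∃ B : F →ₗ[ℂ] F, ∀ x, ‖B x‖ ^ 2 = r ^ 2 * ‖x‖ ^ 2 - ‖Z x‖ ^ 2 := by
  have : CompleteSpace F := FiniteDimensional.complete ℂ F
  let Zc := LinearMap.toContinuousLinearMap Z
  let P : F →L[ℂ] F := ((r ^ 2 : ℝ) : ℂ) • 1 - ContinuousLinearMap.adjoint Zc ∘L Zc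
  have hinner : ∀ x, inner ℂ (P x) x = ((r ^ 2 * ‖x‖ ^ 2 - ‖Z x‖ ^ 2 : ℝ) : ℂ) := fun x => by
    simp only [P, sub_apply, smul_apply,
      one_apply_eq_self, ContinuousLinearMap.comp_apply, inner_sub_left,
      ContinuousLinearMap.adjoint_inner_left, inner_smul_left, inner_self_eq_norm_sq_to_K]
    simp [Zc]
  have hpos : 0 ≤ P := by
    rw [ContinuousLinearMap.nonneg_iff_isPositive, ContinuousLinearMap.isPositive_iff_complex]
    intro x
    rw [hinner]
    refine ⟨congrArg _ (RCLike.ofReal_re _), ?_⟩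
    rw [RCLike.re_eq_complex_re, Complex.ofReal_re]
    have := pow_le_pow_left₀ (norm_nonneg _) (hZ x) 2
    rw [mul_pow] at this
    exact sub_nonneg.mpr this
  obtain ⟨B, hB⟩ := CStarAlgebra.nonneg_iff_eq_star_mul_self.mp hpos
  refine ⟨B, fun x => ?_⟩
  have h := hinner x
  rw [hB, mul_apply_eq_comp, ContinuousLinearMap.star_eq_adjoint,
    ContinuousLinearMap.adjoint_inner_left, inner_self_eq_norm_sq_to_K] at h
  exact Complex.ofReal_injective (Eq.trans (by push_cast; rfl) h)

end Extension

section Factorization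

variable {H : Type*} [NormedAddCommGroup H] [InnerProductSpace ℂ H] [CompleteSpace H]

theorem norm_smul_sub_smul_le {F : Type*} [NormedAddCommGroup F] [InnerProductSpace ℂ F]
    {c s : ℝ} (hc : 0 ≤ c) (hs : 0 < s) (hcs : s ^ 2 + c ^ 2 = 1) {x y : F}
    (h : ‖y - x‖ ≤ (1 - c) * ‖x‖) :
    ‖((c ^ 2 / s : ℝ) : ℂ) • x - ((c / s : ℝ) : ℂ) • y‖ ≤ s * ‖x‖ := by
  have hc1 : c ≤ 1 := by nlinarith
  have h1 : ((c ^ 2 / s : ℝ) : ℂ) • x - ((c / s : ℝ) : ℂ) • y =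
      -(((c / s : ℝ) : ℂ) • ((y - x) + ((1 - c : ℝ) : ℂ) • x)) := by
    push_cast
    module
  have h2 : ‖((1 - c : ℝ) : ℂ) • x‖ = (1 - c) * ‖x‖ := by
    rw [norm_smul, Complex.norm_real, Real.norm_of_nonneg (by linarith)]
  rw [h1, norm_neg, norm_smul, Complex.norm_real, Real.norm_of_nonneg (by positivity)]
  calc c / s * ‖(y - x) + ((1 - c : ℝ) : ℂ) • x‖
      ≤ c / s * ((1 - c) * ‖x‖ + (1 - c) * ‖x‖) := by
        gcongr
        exact (norm_add_le _ _).trans (by rw [h2]; gcongr)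
    _ = (2 * c * (1 - c)) / s * ‖x‖ := by ring
    _ ≤ s * ‖x‖ := by
        gcongr
        rw [div_le_iff₀ hs]
        nlinarith

theorem exists_eqOn_mul_planeRotation {F M : Submodule ℂ H} [FiniteDimensional ℂ F]
    (hFM : F ≤ Mᗮ) {e e' : F →ₗᵢ[ℂ] H} (he : ∀ x, e x ∈ M) (he' : ∀ x, e' x ∈ M)
    (hee' : ∀ x y, inner ℂ (e x) (e' y) = 0) (hFe : ∀ x y, inner ℂ (F.subtypeₗᵢ x) (e y) = 0)
    {θ : ℝ} (hsin : 0 < Real.sin θ) (hcos : 0 ≤ Real.cos θ) {u : H ≃ₗᵢ[ℂ] H}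
    (hu : ∀ x : F, ‖u x - x‖ ≤ (1 - Real.cos θ) * ‖(x : H)‖)
    (huM : ∀ x : F, u x - F.orthogonalProjectionOnto (u x) ∈ M) :
    ∃ g₀ ∈ pointwiseStabilizer Mᗮ, ∃ g₁ ∈ pointwiseStabilizer Mᗮ, ∃ g₂ ∈ pointwiseStabilizer Mᗮ,
      ∀ x : F, g₀ (planeRotation hFe θ (g₁ (planeRotation hFe θ (g₂ (planeRotation hFe θ x))))) =
        u x := by
  set R := planeRotation hFe θ with hR
  set c := Real.cos θ
  set s := Real.sin θ
  have hcs : s ^ 2 + c ^ 2 = 1 := Real.sin_sq_add_cos_sq θ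
  have hcs' : (s : ℂ) ^ 2 + (c : ℂ) ^ 2 = 1 := by exact_mod_cast hcs
  have hsne : (s : ℂ) ≠ 0 := by exact_mod_cast hsin.ne'
  have hFM' : ∀ (x : F), ∀ z ∈ M, inner ℂ (x : H) z = 0 := fun x z hz =>
    (Submodule.mem_orthogonal' _ _).mp (hFM x.2) z hz
  have hRapply : ∀ x y z : F, R (x + e y + e' z) =
      (((c : ℂ) • x - (s : ℂ) • y : F) : H) + e ((s : ℂ) • x + (c : ℂ) • y) + e' z :=
    fun x y z => planeRotation_apply hFe θ x y (fun x => hFM' x _ (he' z)) fun y => hee' y z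
  have hMnorm : ∀ (x : F), ∀ z ∈ M, ‖(x + z : H)‖ ^ 2 = ‖x‖ ^ 2 + ‖z‖ ^ 2 := fun x z hz => by
    rw [@norm_add_sq ℂ, hFM' x z hz]
    simp
  have hee'norm : ∀ y z : F, ‖e y + e' z‖ ^ 2 = ‖y‖ ^ 2 + ‖z‖ ^ 2 := fun y z => by
    rw [@norm_add_sq ℂ, hee']
    simp
  let T : F →ₗ[ℂ] F := (F.orthogonalProjectionOnto : H →ₗ[ℂ] F) ∘ₗ
    (u.toLinearEquiv : H →ₗ[ℂ] H) ∘ₗ F.subtype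
  let m : F →ₗ[ℂ] H := (u.toLinearEquiv : H →ₗ[ℂ] H) ∘ₗ F.subtype - F.subtype ∘ₗ T
  have hm : ∀ x, m x ∈ M := huM
  have hum : ∀ x : F, u x = T x + m x := fun x => by
    change u x = T x + (u x - T x)
    abel
  have hT : ∀ x, ‖T x - x‖ ≤ (1 - c) * ‖x‖ := fun x => by
    refine le_trans ?_ (hu x)
    have : T x - x = F.orthogonalProjectionOnto (u x - x) := by
      rw [map_sub, F.orthogonalProjectionOnto_mem_subspace_eq_self]
      rfl
    rw [this]
    exact F.norm_orthogonalProjectionOnto_apply_le _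
  have hTm : ∀ x, ‖T x‖ ^ 2 + ‖m x‖ ^ 2 = ‖x‖ ^ 2 := fun x => by
    rw [← hMnorm _ _ (hm x), ← hum, u.norm_map, Submodule.coe_norm]
  let Z : F →ₗ[ℂ] F := ((c ^ 2 / s : ℝ) : ℂ) • LinearMap.id - ((c / s : ℝ) : ℂ) • T
  have hZ : ∀ x, Z x = ((c ^ 2 / s : ℝ) : ℂ) • x - ((c / s : ℝ) : ℂ) • T x := fun x => rfl
  obtain ⟨B, hB⟩ := exists_norm_sq_eq_sub_s13 (Z := Z) (r := s) fun x =>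
    norm_smul_sub_smul_le hcos hsin hcs (hT x)
  obtain ⟨B', hB'⟩ := exists_norm_sq_eq_sub_s13 (Z := T) (r := 1) fun x => by
    rw [one_mul, ← sq_le_sq₀ (norm_nonneg _) (norm_nonneg _), ← hTm x]
    exact le_add_of_nonneg_right (sq_nonneg _)
  obtain ⟨g₂, hg₂, hg₂'⟩ := exists_mem_pointwiseStabilizer_apply_eq (M := M)
    (m := e.toLinearMap ∘ₗ ((s : ℂ) • LinearMap.id))
    (m' := e.toLinearMap ∘ₗ Z + e'.toLinearMap ∘ₗ B) (fun x => he _)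
    (fun x => M.add_mem (he _) (he' _)) fun x => by
      rw [← sq_eq_sq₀ (norm_nonneg _) (norm_nonneg _)]
      refine Eq.trans ?_ (hee'norm (Z x) (B x)).symm
      rw [hB, LinearMap.comp_apply, LinearIsometry.coe_toLinearMap, e.norm_map]
      simp [norm_smul, mul_pow]
  have h₂ : ∀ x : F, R (g₂ (R x)) =
      ((c : ℂ) • T x : F) + (e ((s : ℂ) • (c : ℂ) • x + (c : ℂ) • Z x) + e' (B x)) := fun x => by
    have h1 : R x = ((c : ℂ) • x : F) + e ((s : ℂ) • x) := by
      simpa using hRapply x 0 0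
    have h2 : g₂ (e ((s : ℂ) • x)) = e (Z x) + e' (B x) := hg₂' x
    rw [h1, map_add, hg₂ _ (hFM (Subtype.prop _)), h2, ← add_assoc, hRapply, ← add_assoc]
    congr 4
    rw [hZ]
    push_cast
    match_scalars <;> field_simp
    ring
  obtain ⟨g₁, hg₁, hg₁'⟩ := exists_mem_pointwiseStabilizer_apply_eq (M := M)
    (m := e.toLinearMap ∘ₗ ((s : ℂ) • (c : ℂ) • LinearMap.id + (c : ℂ) • Z) + e'.toLinearMap ∘ₗ B)
    (m' := e.toLinearMap ∘ₗ (-(s : ℂ) • T) + e'.toLinearMap ∘ₗ B')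
    (fun x => M.add_mem (he _) (he' _)) (fun x => M.add_mem (he _) (he' _)) fun x => by
      rw [← sq_eq_sq₀ (norm_nonneg _) (norm_nonneg _)]
      refine Eq.trans ?_ (hee'norm (-(s : ℂ) • T x) (B' x)).symm
      have h1 := congrArg (fun v => ‖v‖ ^ 2) (h₂ x)
      simp only [LinearIsometryEquiv.norm_map] at h1
      rw [hMnorm _ _ (M.add_mem (he _) (he' _)), norm_smul, mul_pow] at h1
      rw [hB', norm_smul, mul_pow, norm_neg]
      simp only [Complex.norm_real, Real.norm_eq_abs, sq_abs, Submodule.coe_norm] at h1 ⊢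
      refine Eq.trans ?_ (eq_sub_of_add_eq' h1.symm |>.trans ?_)
      · rfl
      · linear_combination -‖(T x : H)‖ ^ 2 * hcs
  have h₁ : ∀ x : F, R (g₁ (R (g₂ (R x)))) = T x + e' (B' x) := fun x => by
    have h1 : g₁ (e ((s : ℂ) • (c : ℂ) • x + (c : ℂ) • Z x) + e' (B x)) =
      e (-(s : ℂ) • T x) + e' (B' x) := hg₁' x
    have h2 : (c : ℂ) • (c : ℂ) • T x - (s : ℂ) • -(s : ℂ) • T x = T x := by
      calc _ = ((s : ℂ) ^ 2 + (c : ℂ) ^ 2) • T x := by module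
        _ = T x := by rw [hcs', one_smul]
    have h3 : (s : ℂ) • (c : ℂ) • T x + (c : ℂ) • -(s : ℂ) • T x = 0 := by module
    rw [h₂, map_add, hg₁ _ (hFM (Subtype.prop _)), h1, ← add_assoc, hRapply, h2, h3, map_zero,
      add_zero]
  obtain ⟨g₀, hg₀, hg₀'⟩ := exists_mem_pointwiseStabilizer_apply_eq (M := M)
    (m := e'.toLinearMap ∘ₗ B') (m' := m) (fun x => he' _) hm fun x => by
      rw [← sq_eq_sq₀ (norm_nonneg _) (norm_nonneg _), LinearMap.comp_apply,
        LinearIsometry.coe_toLinearMap, e'.norm_map, hB']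
      linear_combination -hTm x
  refine ⟨g₀, hg₀, g₁, hg₁, g₂, hg₂, fun x => ?_⟩
  rw [h₁, map_add, hg₀ _ (hFM (Subtype.prop _)), hum]
  exact congrArg _ (hg₀' x)

end Factorization

section Neighborhood

theorem mul_subset_pow_add_two_mul {G : Type*} [Group G] {W : Set G} (hsym : W⁻¹ = W)
    (hne : W.Nonempty) (k j : ℕ) : W ^ k ⊆ W ^ (k + 2 * j) := by
  obtain ⟨w, hw⟩ := hne
  have h1 : (1 : G) ∈ W ^ 2 := by
    rw [sq, ← mul_inv_cancel w]
    exact Set.mul_mem_mul hw (by rwa [← hsym, Set.inv_mem_inv])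
  have h2 : (1 : G) ∈ (W ^ 2) ^ j := by
    simpa using Set.pow_mem_pow h1 (n := j)
  rw [pow_add, pow_mul]
  exact fun g hg => ⟨g, hg, 1, h2, mul_one g⟩

theorem exists_orthogonal_linearIsometry {H : Type*} [NormedAddCommGroup H]
    [InnerProductSpace ℂ H] [CompleteSpace H] [TopologicalSpace.SeparableSpace H]
    {M : Submodule ℂ H} (hM : IsClosed (M : Set H)) (hMinf : ¬ FiniteDimensional ℂ M) :
    ∃ e e' : H →ₗᵢ[ℂ] H, (∀ x, e x ∈ M) ∧ (∀ x, e' x ∈ M) ∧ ∀ x y, inner ℂ (e x) (e' y) = 0 := by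
  have hinf : ¬ FiniteDimensional ℂ H := fun _ => hMinf inferInstance
  have : CompleteSpace M := hM.completeSpace_coe
  obtain ⟨a⟩ := LinearIsometryEquiv.nonempty_of_infinite hinf hMinf
  obtain ⟨Ψ⟩ := LinearIsometryEquiv.nonempty_lp_self hinf Bool
  let f : Bool → H →ₗᵢ[ℂ] M := fun i =>
    { toLinearMap := (a.toLinearEquiv : H →ₗ[ℂ] M) ∘ₗ (Ψ.symm.toLinearEquiv : _ →ₗ[ℂ] H) ∘ₗ
        lp.lsingle (E := fun _ : Bool => H) 2 i
      norm_map' := fun x => by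
        simp only [LinearMap.comp_apply, LinearEquiv.coe_coe, LinearIsometryEquiv.coe_toLinearEquiv,
          LinearIsometryEquiv.norm_map]
        exact lp.norm_single (E := fun _ : Bool => H) (p := 2) (by norm_num) i x }
  refine ⟨M.subtypeₗᵢ.comp (f true), M.subtypeₗᵢ.comp (f false), fun x => Subtype.prop _,
    fun x => Subtype.prop _, fun x y => ?_⟩
  calc inner ℂ (a (Ψ.symm (lp.single 2 true x))) (a (Ψ.symm (lp.single 2 false y)))
      = inner ℂ (lp.single 2 true x : lp (fun _ : Bool => H) 2) (lp.single 2 false y) := by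
        rw [a.inner_map_map, Ψ.symm.inner_map_map]
    _ = 0 := by
        rw [lp.inner_single_left]
        simp

variable {H : Type*} [NormedAddCommGroup H] [InnerProductSpace ℂ H]

theorem exists_isOpen_strongOperatorTopology (F : Submodule ℂ H) [FiniteDimensional ℂ F] {η : ℝ}
    (hη : 0 < η) :
    ∃ Ω : Set (H ≃ₗᵢ[ℂ] H), IsOpen[strongOperatorTopology ℂ H] Ω ∧ 1 ∈ Ω ∧
      ∀ u ∈ Ω, ∀ x : F, ‖u x - x‖ ≤ η * ‖(x : H)‖ := by
  let b := stdOrthonormalBasis ℂ F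
  set n := Module.finrank ℂ F
  have hn : (0 : ℝ) < n + 1 := by positivity
  refine ⟨{u | ∀ k, ‖u (b k) - b k‖ < η / (n + 1)}, ?_, fun k => by simp; positivity,
    fun u hu x => ?_⟩
  · refine isOpen_induced_iff.mpr ⟨{f | ∀ k, ‖f (b k) - b k‖ < η / (n + 1)}, ?_, rfl⟩
    simp only [Set.ofPred_forall]
    exact isOpen_iInter_of_finite fun k => isOpen_lt (by fun_prop) continuous_const
  · have hx : u x - x = ∑ k, inner ℂ (b k) x • (u (b k) - b k : H) := by
      have h := congrArg (F.subtype) (b.sum_repr' x)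
      simp only [map_sum, map_smul, Submodule.subtype_apply] at h
      nth_rewrite 1 2 [← h]
      simp [smul_sub]
    rw [hx]
    calc ‖∑ k, inner ℂ (b k) x • (u (b k) - b k : H)‖
        ≤ ∑ k, ‖x‖ * (η / (n + 1)) := by
          refine norm_sum_le_of_le _ fun k _ => ?_
          rw [norm_smul]
          refine mul_le_mul ?_ (hu k).le (norm_nonneg _) (norm_nonneg _)
          simpa [b.orthonormal.1 k] using norm_inner_le_norm (𝕜 := ℂ) (b k) x
      _ = (n / (n + 1)) * (η * ‖(x : H)‖) := by
          simp [n]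
          ring
      _ ≤ η * ‖(x : H)‖ := by
          refine mul_le_of_le_one_left (by positivity) ?_
          rw [div_le_one hn]
          linarith

theorem mem_pointwiseStabilizer_inf_orthogonal {F K : Submodule ℂ H} [FiniteDimensional ℂ F]
    [K.HasOrthogonalProjection] (hFK : F ≤ K) {g : H ≃ₗᵢ[ℂ] H} (hF : g ∈ pointwiseStabilizer F)
    (hK : g ∈ pointwiseStabilizer Kᗮ) : g ∈ pointwiseStabilizer (K ⊓ Fᗮ)ᗮ := by
  intro x hx
  obtain ⟨y, hy, z, hz, rfl⟩ := K.exists_add_mem_mem_orthogonal x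
  obtain ⟨f, hf, m, hm, rfl⟩ := F.exists_add_mem_mem_orthogonal y
  have hmK : m ∈ K := by simpa using K.sub_mem hy (hFK hf)
  have h := (Submodule.mem_orthogonal _ _).mp hx m ⟨hmK, hm⟩
  rw [inner_add_right, inner_add_right, (Submodule.mem_orthogonal' _ _).mp hm f hf,
    (Submodule.mem_orthogonal _ _).mp hz m hmK, zero_add, add_zero, inner_self_eq_zero] at h
  rw [h, add_zero, map_add, hF f hf, hK z hz]

theorem exists_mem_pointwiseStabilizer_eqOn_orthogonal {K : Submodule ℂ H}
    [K.HasOrthogonalProjection] {u : H ≃ₗᵢ[ℂ] H} (hu : u ∈ setwiseStabilizer K) :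
    ∃ v ∈ pointwiseStabilizer K, ∀ x ∈ Kᗮ, v x = u x := by
  have hmap : Kᗮ.map (u.toLinearEquiv : H →ₗ[ℂ] H) = Kᗮ := by
    have := Submodule.map_orthogonal_equiv K u
    rw [show K.map (u.toLinearEquiv : H →ₗ[ℂ] H) = K from hu] at this
    exact this
  obtain ⟨v, hv, hv'⟩ := LinearIsometryEquiv.exists_extend_orthogonal
    (LinearIsometryEquiv.refl ℂ K)
    ((LinearIsometryEquiv.submoduleMap Kᗮ u).trans (LinearIsometryEquiv.ofEq _ _ hmap))
  refine ⟨v, fun x hx => hv ⟨x, hx⟩, fun x hx => hv' ⟨x, hx⟩⟩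

theorem conj_mem_pointwiseStabilizer {M K : Submodule ℂ H} {h : H ≃ₗᵢ[ℂ] H}
    (hM : ∀ x ∈ M, h⁻¹ x ∈ Kᗮ) {g : H ≃ₗᵢ[ℂ] H} (hg : g ∈ pointwiseStabilizer Mᗮ) :
    h⁻¹ * g * h ∈ pointwiseStabilizer K := fun x hx => by
  have hxM : h x ∈ Mᗮ := (Submodule.mem_orthogonal _ _).mpr fun m hm => by
    rw [← show h (h⁻¹ m) = m from h.apply_symm_apply m, h.inner_map_map]
    exact (Submodule.mem_orthogonal' _ _).mp (hM m hm) x hx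
  simp only [LinearIsometryEquiv.coe_mul, Function.comp_apply, hg _ hxM]
  exact h.symm_apply_apply x

variable [CompleteSpace H]

theorem exists_eq_mul_planeRotation {F K : Submodule ℂ H} [FiniteDimensional ℂ F]
    (hK : IsClosed (K : Set H)) (hFK : F ≤ K) {e e' : F →ₗᵢ[ℂ] H} (he : ∀ x, e x ∈ K ⊓ Fᗮ)
    (he' : ∀ x, e' x ∈ K ⊓ Fᗮ) (hee' : ∀ x y, inner ℂ (e x) (e' y) = 0)
    (hFe : ∀ x y, inner ℂ (F.subtypeₗᵢ x) (e y) = 0)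
    {θ : ℝ} (hsin : 0 < Real.sin θ) (hcos : 0 ≤ Real.cos θ) {u : H ≃ₗᵢ[ℂ] H}
    (huK : u ∈ setwiseStabilizer K)
    (hu : ∀ x : F, ‖u x - x‖ ≤ (1 - Real.cos θ) * ‖(x : H)‖) :
    ∃ g₀ ∈ pointwiseStabilizer (K ⊓ Fᗮ)ᗮ, ∃ g₁ ∈ pointwiseStabilizer (K ⊓ Fᗮ)ᗮ,
      ∃ g₂ ∈ pointwiseStabilizer (K ⊓ Fᗮ)ᗮ, ∃ g₃ ∈ pointwiseStabilizer (K ⊓ Fᗮ)ᗮ,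
      ∃ v ∈ pointwiseStabilizer K,
      u = g₀ * planeRotation hFe θ * g₁ * planeRotation hFe θ * g₂ * planeRotation hFe θ *
        g₃ * v := by
  have : CompleteSpace K := hK.completeSpace_coe
  have hFM : F ≤ (K ⊓ Fᗮ)ᗮ :=
    F.le_orthogonal_orthogonal.trans (Submodule.orthogonal_le inf_le_right)
  have hKM : Kᗮ ≤ (K ⊓ Fᗮ)ᗮ := Submodule.orthogonal_le inf_le_left
  have huM : ∀ x : F, u x - F.orthogonalProjectionOnto (u x) ∈ K ⊓ Fᗮ := fun x => by
    have hux : u x ∈ K := by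
      rw [← show K.map (u.toLinearEquiv : H →ₗ[ℂ] H) = K from huK]
      exact ⟨x, hFK x.2, rfl⟩
    exact ⟨K.sub_mem hux (hFK (Subtype.prop _)), F.sub_starProjection_mem_orthogonal _⟩
  obtain ⟨g₀, hg₀, g₁, hg₁, g₂, hg₂, heq⟩ :=
    exists_eqOn_mul_planeRotation hFM he he' hee' hFe hsin hcos hu huM
  obtain ⟨v, hv, hvu⟩ := exists_mem_pointwiseStabilizer_eqOn_orthogonal huK
  set R := planeRotation hFe θ
  have hR : R ∈ pointwiseStabilizer Kᗮ := fun z hz => by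
    have := planeRotation_apply hFe θ 0 0 (fun x => (Submodule.mem_orthogonal _ _).mp hz x (hFK x.2))
      fun x => (Submodule.mem_orthogonal _ _).mp hz _ (he x).1
    simpa using this
  set w := g₀ * R * g₁ * R * g₂ * R
  have hw : w ∈ pointwiseStabilizer Kᗮ := fun z hz => by
    simp only [w, LinearIsometryEquiv.coe_mul, Function.comp_apply, hR z hz, hg₀ z (hKM hz),
      hg₁ z (hKM hz), hg₂ z (hKM hz)]
  have hvK : ∀ z ∈ Kᗮ, v⁻¹ z ∈ Kᗮ := fun z hz =>
    apply_mem_orthogonal_of_mem_pointwiseStabilizer (inv_mem_pointwiseStabilizer hv) hz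
  refine ⟨g₀, hg₀, g₁, hg₁, g₂, hg₂, w⁻¹ * u * v⁻¹,
    mem_pointwiseStabilizer_inf_orthogonal hFK (fun x hx => ?_) fun z hz => ?_, v, hv, ?_⟩
  · simp only [LinearIsometryEquiv.coe_mul, Function.comp_apply,
      inv_mem_pointwiseStabilizer hv x (hFK hx)]
    exact (LinearIsometryEquiv.symm_apply_eq w).mpr (heq ⟨x, hx⟩).symm
  · simp only [LinearIsometryEquiv.coe_mul, Function.comp_apply]
    rw [← hvu _ (hvK z hz), show v (v⁻¹ z) = z from v.apply_symm_apply z]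
    exact inv_mem_pointwiseStabilizer hw z hz
  · change u = w * (w⁻¹ * u * v⁻¹) * v
    group

end Neighborhood

/-- Let `H` be an infinite-dimensional separable complex Hilbert space and `W` a symmetric
countably syndetic subset of `U(H)`. Then there is a balanced closed subspace `K` of `H`
(i.e. both `K` and `Kᗮ` are infinite-dimensional) such that the pointwise stabilizer `G_K`
is contained in `W ^ 24`, and `W ^ 120` contains a subset of the setwise stabilizer `I_K`
that is an open neighborhood of the identity in `I_K` (for the relative strong operator
topology). -/
theorem exists_balanced_subspace_stabilizer_open_nhd
    {H : Type*} [NormedAddCommGroup H] [InnerProductSpace ℂ H] [CompleteSpace H]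
    [TopologicalSpace.SeparableSpace H] (hinf : ¬ FiniteDimensional ℂ H)
    (W : Set (H ≃ₗᵢ[ℂ] H)) (hsym : W⁻¹ = W)
    (hsynd : ∃ s : ℕ → (H ≃ₗᵢ[ℂ] H), ∀ g : (H ≃ₗᵢ[ℂ] H), ∃ n : ℕ, g ∈ s n • W) :
    ∃ K : Submodule ℂ H, IsClosed (K : Set H) ∧
      ¬ FiniteDimensional ℂ K ∧ ¬ FiniteDimensional ℂ Kᗮ ∧
      pointwiseStabilizer K ⊆ W ^ 24 ∧
      ∃ O : Set (H ≃ₗᵢ[ℂ] H), O ⊆ setwiseStabilizer K ∧ O ⊆ W ^ 120 ∧ 1 ∈ O ∧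
        ∃ Ω : Set (H ≃ₗᵢ[ℂ] H), IsOpen[strongOperatorTopology ℂ H] Ω ∧
          O = Ω ∩ setwiseStabilizer K := by
  obtain ⟨Φ⟩ := LinearIsometryEquiv.nonempty_lp_self hinf (ℕ × ℕ × ℤ)
  obtain ⟨i, hi⟩ := exists_block_stabilizer_subset_pow Φ hsym hsynd
  set K := supportedOn Φ {i}ᶜ
  have hKcl : IsClosed (K : Set H) := isClosed_supportedOn _ _
  have hKinf : ¬ FiniteDimensional ℂ K :=
    not_finiteDimensional_supportedOn hinf Φ (Set.nonempty_compl_of_nontrivial i)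
  have hKinf' : ¬ FiniteDimensional ℂ Kᗮ := by
    rw [orthogonal_supportedOn, compl_compl]
    exact not_finiteDimensional_supportedOn hinf Φ (Set.singleton_nonempty i)
  have hne : W.Nonempty := by
    obtain ⟨s, hs⟩ := hsynd
    obtain ⟨n, w, hw, -⟩ := hs 1
    exact ⟨w, hw⟩
  refine ⟨K, hKcl, hKinf, hKinf', hi.trans (mul_subset_pow_add_two_mul hsym hne 8 8), ?_⟩
  obtain ⟨h, hh, F, hFK, hF, hM⟩ :=
    exists_pow_two_inv_apply_mem_orthogonal hsym hsynd hKcl hKinf hKinf'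
  have hMinf : ¬ FiniteDimensional ℂ (K ⊓ Fᗮ : Submodule ℂ H) := fun _ => by
    refine hKinf ?_
    rw [← Submodule.sup_orthogonal_inf_of_hasOrthogonalProjection hFK, inf_comm]
    infer_instance
  obtain ⟨e, e', he, he', hee'⟩ := exists_orthogonal_linearIsometry
    (M := K ⊓ Fᗮ) (hKcl.inter (Submodule.isClosed_orthogonal F)) hMinf
  have hFe : ∀ x y : F, inner ℂ (F.subtypeₗᵢ x) (e.comp F.subtypeₗᵢ y) = 0 := fun x y =>
    (Submodule.mem_orthogonal _ _).mp (he y).2 x x.2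
  obtain ⟨θ, ⟨hθ0, hθ1⟩, hθ⟩ := exists_planeRotation_conj_mem_pow_two hsym hsynd hFe h
  have hpi : θ < Real.pi / 2 := by linarith [Real.pi_gt_three]
  have hsin : 0 < Real.sin θ := Real.sin_pos_of_pos_of_lt_pi hθ0 (by linarith)
  have hcos : 0 ≤ Real.cos θ := Real.cos_nonneg_of_mem_Icc ⟨by linarith, hpi.le⟩
  have hcos1 : 0 < 1 - Real.cos θ := by
    nlinarith [Real.sin_sq_add_cos_sq θ]
  obtain ⟨Ω, hΩ, hΩ1, hΩF⟩ := exists_isOpen_strongOperatorTopology F hcos1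
  refine ⟨Ω ∩ setwiseStabilizer K, Set.inter_subset_right, ?_, ⟨hΩ1, Submodule.map_id K⟩,
    Ω, hΩ, rfl⟩
  rintro u ⟨huΩ, huK⟩
  obtain ⟨g₀, hg₀, g₁, hg₁, g₂, hg₂, g₃, hg₃, v, hv, hu⟩ := exists_eq_mul_planeRotation
    (e := e.comp F.subtypeₗᵢ) (e' := e'.comp F.subtypeₗᵢ) hKcl hFK (fun x => he x)
    (fun x => he' x) (fun x y => hee' x y) hFe hsin hcos huK (hΩF u huΩ)
  set R := planeRotation hFe θ
  have hconj : ∀ g ∈ pointwiseStabilizer (K ⊓ Fᗮ)ᗮ, h⁻¹ * g * h ∈ W ^ 8 := fun g hg =>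
    hi (conj_mem_pointwiseStabilizer (M := K ⊓ Fᗮ) (fun x hx => hM x hx.1 hx.2) hg)
  have hu' : u = h * (h⁻¹ * g₀ * h) * (h⁻¹ * R * h) * (h⁻¹ * g₁ * h) * (h⁻¹ * R * h) *
      (h⁻¹ * g₂ * h) * (h⁻¹ * R * h) * (h⁻¹ * g₃ * h) * h⁻¹ * v := by
    rw [hu]
    group
  refine mul_subset_pow_add_two_mul hsym hne 50 35 ?_
  rw [hu', show 50 = 2 + 8 + 2 + 8 + 2 + 8 + 2 + 8 + 2 + 8 from rfl]
  simp only [pow_add]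
  have hh' := inv_mem_pow_of_inv_eq hsym hh
  exact Set.mul_mem_mul (Set.mul_mem_mul (Set.mul_mem_mul (Set.mul_mem_mul (Set.mul_mem_mul
    (Set.mul_mem_mul (Set.mul_mem_mul (Set.mul_mem_mul (Set.mul_mem_mul hh (hconj _ hg₀)) hθ)
    (hconj _ hg₁)) hθ) (hconj _ hg₂)) hθ) (hconj _ hg₃)) hh') (hi hv)
end
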